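/- arXiv:2601.04009 — 11 statements merged into one kernel-verified Lean document; each statement's English description precedes it below -/
import Mathlib

section
/- Let T₀ = {(x,y) ∈ ℝ² : 0 < x, 0 < y, x + y < 2} be the open standard triangle (the interior of the convex hull of (0,0), (2,0), (0,2)), and let p = (x,y) ∈ T₀. Then the Hilbert unit ball B_p = {ξ ∈ ℝ² : gauge(T₀ − p)(ξ) + gauge(p − T₀)(ξ) ≤ 2} equals the convex hull of the six points ±ξ₁, ±ξ₂, ±ξ₃, where ξ₁ = ((x+y−2)x, (x+y−2)y), ξ₂ = (x(2−x), −xy), ξ₃ = (−xy, y(2−y)). -/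
open Pointwise

/-- The open standard triangle with vertices `(0,0)`, `(2,0)`, `(0,2)`. -/
def stdTriangle : Set (ℝ × ℝ) := {q | 0 < q.1 ∧ 0 < q.2 ∧ q.1 + q.2 < 2}

/-- The Hilbert unit ball of a convex domain `Ω` at a point `p`. -/
noncomputable def hilbertUnitBall (Ω : Set (ℝ × ℝ)) (p : ℝ × ℝ) : Set (ℝ × ℝ) :=
  {ξ : ℝ × ℝ | gauge (Ω - {p}) ξ + gauge ({p} - Ω) ξ ≤ 2}

lemma gauge_tri (x y u v : ℝ) (hx : 0 < x) (hy : 0 < y) (hz : 0 < 2 - x - y) :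
    gauge (stdTriangle - {(x, y)}) (u, v) = max (-u / x) (max (-v / y) ((u + v) / (2 - x - y))) := by
  have key : {r ∈ Set.Ioi (0:ℝ) | (u, v) ∈ r • (stdTriangle - {((x, y) : ℝ × ℝ)})} =
      Set.Ioi (max (-u / x) (max (-v / y) ((u + v) / (2 - x - y)))) := by
    ext t
    have mem : ∀ t : ℝ, 0 < t → ((u, v) ∈ t • (stdTriangle - {((x, y) : ℝ × ℝ)}) ↔
        (-u / x < t ∧ -v / y < t ∧ (u + v) / (2 - x - y) < t)) := by
      intro t ht
      rw [div_lt_iff₀ hx, div_lt_iff₀ hy, div_lt_iff₀ hz]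
      constructor
      · rintro ⟨w, ⟨q, hq, r, hr, rfl⟩, hw⟩
        obtain ⟨q1, q2⟩ := q
        rw [Set.mem_singleton_iff] at hr
        subst hr
        obtain ⟨h1, h2, h3⟩ := hq
        simp only [Prod.mk_sub_mk, Prod.smul_mk, smul_eq_mul, Prod.mk.injEq] at hw h1 h2 h3
        obtain ⟨rfl, rfl⟩ := hw
        refine ⟨?_, ?_, ?_⟩
        · nlinarith [mul_pos ht h1]
        · nlinarith [mul_pos ht h2]
        · nlinarith [mul_pos ht (sub_pos.2 h3)]
      · rintro ⟨h1, h2, h3⟩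
        refine ⟨(u / t, v / t), ⟨(u / t + x, v / t + y), ⟨?_, ?_, ?_⟩, (x, y), rfl, ?_⟩, ?_⟩
        · have : u / t + x = (u + t * x) / t := by field_simp
          simp only [this]
          apply div_pos _ ht
          linarith
        · have : v / t + y = (v + t * y) / t := by field_simp
          simp only [this]
          apply div_pos _ ht
          linarith
        · have : u / t + x + (v / t + y) = ((u + v) + t * (x + y)) / t := by field_simp; ring
          simp only [this]
          rw [div_lt_iff₀ ht]
          linarith
        · simp
        · simp only [Prod.smul_mk, smul_eq_mul, Prod.mk.injEq]
          constructor <;> field_simp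
    simp only [Set.mem_setOf_eq, Set.mem_Ioi, max_lt_iff]
    constructor
    · rintro ⟨ht, h⟩
      exact (mem t ht).1 h
    · intro h
      have ht : 0 < t := by
        obtain ⟨h1, h2, h3⟩ := h
        rw [div_lt_iff₀ hx] at h1
        rw [div_lt_iff₀ hy] at h2
        rw [div_lt_iff₀ hz] at h3
        linarith
      exact ⟨ht, (mem t ht).2 h⟩
  rw [gauge_def, key, csInf_Ioi]

lemma mem_ball_iff (x y u v : ℝ) (hx : 0 < x) (hy : 0 < y) (hz : 0 < 2 - x - y) :
    (u, v) ∈ hilbertUnitBall stdTriangle (x, y) ↔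
      (|u / x - v / y| ≤ 2 ∧ |u / x + (u + v) / (2 - x - y)| ≤ 2 ∧
        |v / y + (u + v) / (2 - x - y)| ≤ 2) := by
  have hneg : ({(x, y)} - stdTriangle : Set (ℝ × ℝ)) = -(stdTriangle - {(x, y)}) := by
    rw [neg_sub]
  have e1 : (-u + -v) / (2 - x - y) = -((u + v) / (2 - x - y)) := by ring
  unfold hilbertUnitBall
  rw [Set.mem_setOf_eq, hneg, gauge_neg_set_eq_gauge_neg, Prod.neg_mk, gauge_tri x y u v hx hy hz,
    gauge_tri x y (-u) (-v) hx hy hz, e1, neg_neg, neg_neg, neg_div, neg_div]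
  generalize u / x = a
  generalize v / y = b
  generalize (u + v) / (2 - x - y) = c
  simp only [abs_le]
  constructor
  · intro h
    have h1 := le_max_left (-a) (max (-b) c)
    have h2 := (le_max_left (-b) c).trans (le_max_right (-a) (max (-b) c))
    have h3 := (le_max_right (-b) c).trans (le_max_right (-a) (max (-b) c))
    have k1 := le_max_left (a) (max (b) (-c))
    have k2 := (le_max_left (b) (-c)).trans (le_max_right (a) (max (b) (-c)))
    have k3 := (le_max_right (b) (-c)).trans (le_max_right (a) (max (b) (-c)))
    refine ⟨⟨?_, ?_⟩, ⟨?_, ?_⟩, ?_, ?_⟩ <;> linarith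
  · rintro ⟨⟨_, _⟩, ⟨_, _⟩, _, _⟩
    rcases max_choice (-a) (max (-b) c) with h | h <;> rw [h] <;>
    rcases max_choice a (max b (-c)) with h | h <;> rw [h] <;>
    rcases max_choice (-b) c with h | h <;> (try rw [h]) <;>
    rcases max_choice b (-c) with h | h <;> (try rw [h]) <;> linarith

lemma hull_comb (S : Set (ℝ × ℝ)) (w e f : ℝ × ℝ) (s t : ℝ) (he : e ∈ S) (hf : f ∈ S) (hne : -e ∈ S)
    (hs : 0 ≤ s) (ht : 0 ≤ t) (hst : s + t ≤ 1) (hw : w = s • e + t • f) :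
    w ∈ convexHull ℝ S := by
  have hc := convex_convexHull ℝ S
  have he' := subset_convexHull ℝ S he
  have hf' := subset_convexHull ℝ S hf
  have hn' := subset_convexHull ℝ S hne
  have h0 : (0 : ℝ × ℝ) ∈ convexHull ℝ S := by
    have := hc he' hn' (a := 1/2) (b := 1/2) (by norm_num) (by norm_num) (by norm_num)
    simpa using this
  have := hc.sum_mem (t := Finset.univ) (w := ![s, t, 1 - s - t]) (z := ![e, f, 0])
    (by intro i _; fin_cases i <;> simp <;> linarith)
    (by simp [Fin.sum_univ_three])
    (by intro i _; fin_cases i <;> simp [he', hf', h0])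
  simp [Fin.sum_univ_three] at this
  rwa [hw]

theorem stmt0 (x y : ℝ) (hp : (x, y) ∈ stdTriangle) :
    hilbertUnitBall stdTriangle (x, y) =
      convexHull ℝ
        ({((x + y - 2) * x, (x + y - 2) * y),
          (x * (2 - x), -(x * y)),
          (-(x * y), y * (2 - y)),
          -(((x + y - 2) * x, (x + y - 2) * y) : ℝ × ℝ),
          -((x * (2 - x), -(x * y)) : ℝ × ℝ),
          -((-(x * y), y * (2 - y)) : ℝ × ℝ)} : Set (ℝ × ℝ)) := by
  obtain ⟨hx, hy, hz⟩ := hp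
  simp only at hx hy hz
  replace hz : 0 < 2 - x - y := by linarith
  apply Set.Subset.antisymm
  · rintro ⟨u, v⟩ h
    rw [mem_ball_iff x y u v hx hy hz] at h
    obtain ⟨a, rfl⟩ : ∃ a, u = - (x * a) := ⟨-u / x, by field_simp⟩
    obtain ⟨b, rfl⟩ : ∃ b, v = - (y * b) := ⟨-v / y, by field_simp⟩
    obtain ⟨c, hc⟩ : ∃ c, (-(x * a) + -(y * b)) / (2 - x - y) = c := ⟨_, rfl⟩
    have e1 : -(x * a) / x = -a := by field_simp
    have e2 : -(y * b) / y = -b := by field_simp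
    rw [hc, e1, e2] at h
    rw [div_eq_iff hz.ne'] at hc
    simp only [abs_le] at h
    obtain ⟨⟨_, _⟩, ⟨_, _⟩, _, _⟩ := h
    rcases le_total a b with hab | hab <;> rcases le_total b c with hbc | hbc <;>
      rcases le_total a c with hac | hac
    · -- a ≤ b ≤ c
      refine hull_comb _ _ (x * (2 - x), -(x * y)) (-((x + y - 2) * x, (x + y - 2) * y))
        ((b - a) / 2) ((c - b) / 2) (by simp) (by simp) (by simp)
        (by linarith) (by linarith) (by linarith) ?_
      ext <;> simp <;> grind
    · refine hull_comb _ _ (x * (2 - x), -(x * y)) (-((x + y - 2) * x, (x + y - 2) * y))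
        ((b - a) / 2) ((c - b) / 2) (by simp) (by simp) (by simp)
        (by linarith) (by linarith) (by linarith) ?_
      ext <;> simp <;> grind
    · -- a ≤ c ≤ b
      refine hull_comb _ _ (x * (2 - x), -(x * y)) (-(-(x * y), y * (2 - y)))
        ((c - a) / 2) ((b - c) / 2) (by simp) (by simp) (by simp)
        (by linarith) (by linarith) (by linarith) ?_
      ext <;> simp <;> grind
    · -- c ≤ a ≤ b
      refine hull_comb _ _ ((x + y - 2) * x, (x + y - 2) * y) (-(-(x * y), y * (2 - y)))
        ((a - c) / 2) ((b - a) / 2) (by simp) (by simp) (by simp)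
        (by linarith) (by linarith) (by linarith) ?_
      ext <;> simp <;> grind
    · -- b ≤ a ≤ c
      refine hull_comb _ _ (-(x * y), y * (2 - y)) (-((x + y - 2) * x, (x + y - 2) * y))
        ((a - b) / 2) ((c - a) / 2) (by simp) (by simp) (by simp)
        (by linarith) (by linarith) (by linarith) ?_
      ext <;> simp <;> grind
    · -- b ≤ c ≤ a
      refine hull_comb _ _ (-(x * y), y * (2 - y)) (-(x * (2 - x), -(x * y)))
        ((c - b) / 2) ((a - c) / 2) (by simp) (by simp) (by simp)
        (by linarith) (by linarith) (by linarith) ?_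
      ext <;> simp <;> grind
    · -- c ≤ b ≤ a
      refine hull_comb _ _ ((x + y - 2) * x, (x + y - 2) * y) (-(x * (2 - x), -(x * y)))
        ((b - c) / 2) ((a - b) / 2) (by simp) (by simp) (by simp)
        (by linarith) (by linarith) (by linarith) ?_
      ext <;> simp <;> grind
    · refine hull_comb _ _ ((x + y - 2) * x, (x + y - 2) * y) (-(x * (2 - x), -(x * y)))
        ((b - c) / 2) ((a - b) / 2) (by simp) (by simp) (by simp)
        (by linarith) (by linarith) (by linarith) ?_
      ext <;> simp <;> grind
  · apply convexHull_min
    · have d1 : ∀ k, (k * x) / x = k := fun k => by field_simp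
      have d2 : ∀ k, (k * y) / y = k := fun k => by field_simp
      have d3 : ∀ k, (k * (2 - x - y)) / (2 - x - y) = k := fun k => by field_simp
      have main : ∀ u v a b c : ℝ, u = a * x → v = b * y → u + v = c * (2 - x - y) →
          |a - b| ≤ 2 → |a + c| ≤ 2 → |b + c| ≤ 2 →
          (u, v) ∈ hilbertUnitBall stdTriangle (x, y) := by
        intro u v a b c h1 h2 h3 h4 h5 h6
        rw [mem_ball_iff x y u v hx hy hz, h3, h1, h2, d1, d2, d3]
        exact ⟨h4, h5, h6⟩
      intro w hw
      simp only [Set.mem_insert_iff, Set.mem_singleton_iff] at hw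
      rcases hw with rfl | rfl | rfl | rfl | rfl | rfl
      · apply main _ _ (x + y - 2) (x + y - 2) (-(x + y)) <;> first | ring1 | (ring_nf; norm_num)
      · apply main _ _ (2 - x) (-x) x <;> first | ring1 | (ring_nf; norm_num)
      · apply main _ _ (-y) (2 - y) y <;> first | ring1 | (ring_nf; norm_num)
      · apply main _ _ (-(x + y - 2)) (-(x + y - 2)) (x + y) <;>
          first | ring1 | (ring_nf; norm_num)
      · apply main _ _ (-(2 - x)) x (-x) <;> first | ring1 | (ring_nf; norm_num)
      · apply main _ _ y (-(2 - y)) (-y) <;> first | ring1 | (ring_nf; norm_num)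
    · rintro ⟨u, v⟩ h ⟨u', v'⟩ h' α β hα hβ hαβ
      rw [mem_ball_iff x y _ _ hx hy hz] at h h'
      simp only [Prod.smul_mk, smul_eq_mul, Prod.mk_add_mk]
      rw [mem_ball_iff x y _ _ hx hy hz]
      have conv : ∀ s t r : ℝ, |s| ≤ 2 → |t| ≤ 2 → r = α * s + β * t → |r| ≤ 2 := by
        intro s t r hs ht hr
        rw [abs_le] at *
        constructor <;> nlinarith
      exact ⟨conv _ _ _ h.1 h'.1 (by ring), conv _ _ _ h.2.1 h'.2.1 (by ring),
        conv _ _ _ h.2.2 h'.2.2 (by ring)⟩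
end

section
/- Let T₀ = {(x,y) ∈ ℝ² : 0 < x, 0 < y, x + y < 2} and let p = (x,y) ∈ T₀. Let B_p = {ξ ∈ ℝ² : gauge(T₀ − p)(ξ) + gauge(p − T₀)(ξ) ≤ 2} be the Hilbert unit ball at p, and let B*_p = {w ∈ ℝ² : ∀ ξ ∈ B_p, w·ξ ≤ 1} be its dual (polar) ball. Then the Lebesgue measure of B*_p equals 3/(2xy(2−x−y)). -/
open Pointwise MeasureTheory

/-- The dual (polar) ball of the Hilbert unit ball of `Ω` at `p`. -/
noncomputable def hilbertDualBall (Ω : Set (ℝ × ℝ)) (p : ℝ × ℝ) : Set (ℝ × ℝ) :=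
  {w : ℝ × ℝ | ∀ ξ ∈ hilbertUnitBall Ω p, w.1 * ξ.1 + w.2 * ξ.2 ≤ 1}

theorem tri_gauge (x y : ℝ) (hx : 0 < x) (hy : 0 < y) (hz : 0 < 2 - x - y) (a b : ℝ) :
    gauge (stdTriangle - {(x, y)}) (a, b) = max (-a / x) (max (-b / y) ((a + b) / (2 - x - y))) := by
  have hM : 0 ≤ max (-a / x) (max (-b / y) ((a + b) / (2 - x - y))) := by
    by_contra h
    simp only [not_le, max_lt_iff] at h
    obtain ⟨h1, h2, h3⟩ := h
    rw [div_lt_iff₀ (by assumption)] at h1 h2 h3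
    linarith
  rw [gauge_def']
  have : {r ∈ Set.Ioi (0:ℝ) | r⁻¹ • (a, b) ∈ stdTriangle - {(x, y)}} =
      Set.Ioi (max (-a / x) (max (-b / y) ((a + b) / (2 - x - y)))) := by
    ext r
    have key : 0 < r → (r⁻¹ • (a, b) ∈ stdTriangle - {(x, y)} ↔
        max (-a / x) (max (-b / y) ((a + b) / (2 - x - y))) < r) := by
      intro hr
      have e : r⁻¹ • (a, b) ∈ stdTriangle - {(x, y)} ↔
          (0 < a / r + x ∧ 0 < b / r + y ∧ (a / r + x) + (b / r + y) < 2) := by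
        simp only [Set.sub_singleton, Set.mem_image, stdTriangle, Set.mem_ofPred_eq]
        constructor
        · rintro ⟨⟨u, v⟩, ⟨h1, h2, h3⟩, h⟩
          simp only [Prod.mk_sub_mk, Prod.smul_mk, smul_eq_mul, Prod.mk.injEq] at h
          have e1 : a / r = u - x := by rw [h.1]; ring
          have e2 : b / r = v - y := by rw [h.2]; ring
          rw [e1, e2]
          simp only at h1 h2 h3
          exact ⟨by linarith, by linarith, by linarith⟩
        · intro h
          refine ⟨(a / r + x, b / r + y), h, ?_⟩
          simp only [Prod.mk_sub_mk, Prod.smul_mk, smul_eq_mul, Prod.mk.injEq]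
          constructor <;> ring
      rw [e, max_lt_iff, max_lt_iff, div_lt_iff₀ hx, div_lt_iff₀ hy, div_lt_iff₀ hz]
      have ea : a = (a / r) * r := by field_simp
      have eb : b = (b / r) * r := by field_simp
      generalize a / r = A at *
      generalize b / r = B at *
      subst ea eb
      constructor
      · rintro ⟨h1, h2, h3⟩
        exact ⟨by nlinarith, by nlinarith, by nlinarith⟩
      · rintro ⟨h1, h2, h3⟩
        refine ⟨?_, ?_, ?_⟩ <;> by_contra h <;> nlinarith
    simp only [Set.mem_ofPred_eq, Set.mem_Ioi]
    constructor
    · rintro ⟨h1, h2⟩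
      exact (key h1).1 h2
    · intro h
      have hr := lt_of_le_of_lt hM h
      exact ⟨hr, (key hr).2 h⟩
  rw [this, csInf_Ioi]

theorem tri_gauge_neg (x y : ℝ) (hx : 0 < x) (hy : 0 < y) (hz : 0 < 2 - x - y) (a b : ℝ) :
    gauge ({(x, y)} - stdTriangle) (a, b) =
      max (a / x) (max (b / y) (-(a + b) / (2 - x - y))) := by
  rw [← neg_sub stdTriangle, gauge_neg_set_eq_gauge_neg]
  have := tri_gauge x y hx hy hz (-a) (-b)
  simp only [neg_neg] at this
  rw [show -(a, b) = (-a, -b) from rfl, this]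
  ring_nf

theorem tri_ball (x y : ℝ) (hx : 0 < x) (hy : 0 < y) (hz : 0 < 2 - x - y) (a b : ℝ) :
    (a, b) ∈ hilbertUnitBall stdTriangle (x, y) ↔
      |(b / y - a / x) / 2| ≤ 1 ∧ |(- b / y - (a + b) / (2 - x - y)) / 2| ≤ 1 ∧
      |(b / y - a / x) / 2 + (- b / y - (a + b) / (2 - x - y)) / 2| ≤ 1 := by
  rw [hilbertUnitBall, Set.mem_ofPred_eq, tri_gauge x y hx hy hz, tri_gauge_neg x y hx hy hz]
  rw [neg_div, neg_div, neg_div]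
  generalize a / x = A
  generalize b / y = B
  generalize (a + b) / (2 - x - y) = C
  simp only [abs_le]
  constructor
  · intro h
    have h1 := le_max_left (-A) (max (-B) C)
    have h2 := (le_max_left (-B) C).trans (le_max_right (-A) _)
    have h3 := (le_max_right (-B) C).trans (le_max_right (-A) _)
    have h4 := le_max_left (A) (max (B) (-C))
    have h5 := (le_max_left (B) (-C)).trans (le_max_right (A) _)
    have h6 := (le_max_right (B) (-C)).trans (le_max_right (A) _)
    refine ⟨⟨?_, ?_⟩, ⟨?_, ?_⟩, ?_, ?_⟩ <;> linarith
  · rintro ⟨⟨h1, h2⟩, ⟨h3, h4⟩, h5, h6⟩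
    rcases max_choice (-A) (max (-B) C) with e | e <;>
    rcases max_choice (-B) C with e' | e' <;>
    rcases max_choice (A) (max (B) (-C)) with e2 | e2 <;>
    rcases max_choice (B) (-C) with e2' | e2' <;>
    linarith

def hexSet : Set (ℝ × ℝ) := {q | |q.1| ≤ 1 ∧ |q.2| ≤ 1 ∧ |q.1 - q.2| ≤ 1}

theorem hex_polar (s t E F : ℝ) (h : |s| ≤ 1 ∧ |t| ≤ 1 ∧ |s - t| ≤ 1)
    (h' : |E| ≤ 1 ∧ |F| ≤ 1 ∧ |E + F| ≤ 1) : s * E + t * F ≤ 1 := by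
  simp only [abs_le] at h h'
  obtain ⟨⟨a1, a2⟩, ⟨a3, a4⟩, a5, a6⟩ := h
  obtain ⟨⟨b1, b2⟩, ⟨b3, b4⟩, b5, b6⟩ := h'
  rcases le_total 0 E with hE | hE <;> rcases le_total 0 F with hF | hF <;>
  rcases le_total 0 (E + F) with hG | hG <;> nlinarith

theorem hex_volume : volume hexSet = ENNReal.ofReal 3 := by
  have hm : MeasurableSet hexSet := by
    apply IsClosed.measurableSet
    have c1 : IsClosed {q : ℝ × ℝ | |q.1| ≤ 1} := isClosed_le (by fun_prop) (by fun_prop)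
    have c2 : IsClosed {q : ℝ × ℝ | |q.2| ≤ 1} := isClosed_le (by fun_prop) (by fun_prop)
    have c3 : IsClosed {q : ℝ × ℝ | |q.1 - q.2| ≤ 1} := isClosed_le (by fun_prop) (by fun_prop)
    exact c1.inter (c2.inter c3)
  rw [Measure.volume_eq_prod, Measure.prod_apply hm]
  have : ∀ s : ℝ, volume (Prod.mk s ⁻¹' hexSet) =
      (Set.Icc (-1:ℝ) 1).indicator (fun s => ENNReal.ofReal (2 - |s|)) s := by
    intro s
    by_cases hs : s ∈ Set.Icc (-1:ℝ) 1
    · rw [Set.indicator_of_mem hs]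
      rcases le_total 0 s with h | h
      · have : Prod.mk s ⁻¹' hexSet = Set.Icc (s - 1) 1 := by
          ext t
          simp only [hexSet, Set.mem_preimage, Set.mem_ofPred_eq, abs_le, Set.mem_Icc] at *
          constructor
          · rintro ⟨_, ⟨_, _⟩, _, _⟩
            constructor <;> linarith
          · rintro ⟨_, _⟩
            refine ⟨hs, ⟨?_, ?_⟩, ?_, ?_⟩ <;> linarith [hs.1, hs.2]
        rw [this, Real.volume_Icc, abs_of_nonneg h]; ring_nf
      · have : Prod.mk s ⁻¹' hexSet = Set.Icc (-1) (s + 1) := by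
          ext t
          simp only [hexSet, Set.mem_preimage, Set.mem_ofPred_eq, abs_le, Set.mem_Icc] at *
          constructor
          · rintro ⟨_, ⟨_, _⟩, _, _⟩
            constructor <;> linarith
          · rintro ⟨_, _⟩
            refine ⟨hs, ⟨?_, ?_⟩, ?_, ?_⟩ <;> linarith [hs.1, hs.2]
        rw [this, Real.volume_Icc, abs_of_nonpos h]; ring_nf
    · rw [Set.indicator_of_notMem hs]
      have : Prod.mk s ⁻¹' hexSet = ∅ := by
        ext t
        simp only [hexSet, Set.mem_preimage, Set.mem_ofPred_eq, abs_le, Set.mem_Icc,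
          Set.mem_empty_iff_false, iff_false] at *
        exact fun h => hs h.1
      rw [this, measure_empty]
  simp_rw [this]
  have hc : Continuous fun s : ℝ => 2 - |s| := by fun_prop
  rw [lintegral_indicator measurableSet_Icc, ← ofReal_integral_eq_lintegral_ofReal]
  · congr 1
    rw [integral_Icc_eq_integral_Ioc, ← intervalIntegral.integral_of_le (by norm_num),
      ← intervalIntegral.integral_add_adjacent_intervals (b := 0)
        (hc.intervalIntegrable _ _) (hc.intervalIntegrable _ _)]
    have e1 : ∫ s in (-1:ℝ)..0, (2 - |s|) = ∫ s in (-1:ℝ)..0, (2 + s) := by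
      apply intervalIntegral.integral_congr
      intro s hs
      rw [Set.uIcc_of_le (by norm_num)] at hs
      simp only [abs_of_nonpos hs.2]; ring
    have e2 : ∫ s in (0:ℝ)..1, (2 - |s|) = ∫ s in (0:ℝ)..1, (2 - s) := by
      apply intervalIntegral.integral_congr
      intro s hs
      rw [Set.uIcc_of_le (by norm_num)] at hs
      simp only [abs_of_nonneg hs.1]
    rw [e1, e2, intervalIntegral.integral_add (by simp) (by simp),
      intervalIntegral.integral_sub (by simp) (by simp)]
    simp only [intervalIntegral.integral_const, integral_id, smul_eq_mul]
    norm_num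
  · exact (hc.continuousOn.integrableOn_compact isCompact_Icc)
  · filter_upwards [ae_restrict_mem measurableSet_Icc] with s hs
    have := abs_le.2 hs
    simp only [Pi.zero_apply]
    linarith

theorem stmt1 (x y : ℝ) (hp : (x, y) ∈ stdTriangle) :
    volume (hilbertDualBall stdTriangle (x, y)) =
      ENNReal.ofReal (3 / (2 * x * y * (2 - x - y))) := by
  obtain ⟨hx, hy, hz⟩ := hp
  simp only at hx hy hz
  replace hz : 0 < 2 - x - y := by linarith
  obtain ⟨L, hL⟩ : ∃ L : (ℝ × ℝ) →ₗ[ℝ] (ℝ × ℝ), L = Matrix.toLin (Module.Basis.finTwoProd ℝ)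
    (Module.Basis.finTwoProd ℝ) !![-x * (2 - x), x * y; -x * (2 - x - y), -y * (2 - x - y)] :=
      ⟨_, rfl⟩
  have hdet : LinearMap.det L = 2 * x * y * (2 - x - y) := by
    rw [hL, LinearMap.det_toLin, Matrix.det_fin_two_of]; ring
  have hpos : 0 < 2 * x * y * (2 - x - y) := by positivity
  have hset : hilbertDualBall stdTriangle (x, y) = L ⁻¹' hexSet := by
    ext ⟨u, v⟩
    rw [Set.mem_preimage, hL, Matrix.toLin_finTwoProd_apply]
    simp only [hexSet, hilbertDualBall, Set.mem_ofPred_eq]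
    constructor
    · intro h
      have hb : ∀ E F : ℝ, |E| ≤ 1 → |F| ≤ 1 → |E + F| ≤ 1 →
          E * (-x * (2 - x) * u + x * y * v) +
            F * (-x * (2 - x - y) * u + -y * (2 - x - y) * v) ≤ 1 := by
        intro E F h1 h2 h3
        have := h (E * (-x * (2 - x)) + F * (-x * (2 - x - y)),
          E * (x * y) + F * (-y * (2 - x - y))) ?_
        · simp only at this
          linarith
        · rw [tri_ball x y hx hy hz]
          have eE : ((E * (x * y) + F * (-y * (2 - x - y))) / y -
            (E * (-x * (2 - x)) + F * (-x * (2 - x - y))) / x) / 2 = E := by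
            field_simp; ring
          have eF : (-(E * (x * y) + F * (-y * (2 - x - y))) / y -
            (E * (-x * (2 - x)) + F * (-x * (2 - x - y)) +
              (E * (x * y) + F * (-y * (2 - x - y)))) / (2 - x - y)) / 2 = F := by
            field_simp; ring
          rw [eE, eF]
          exact ⟨h1, h2, h3⟩
      have c1 := hb 1 0 (by norm_num) (by norm_num) (by norm_num)
      have c2 := hb (-1) 0 (by norm_num) (by norm_num) (by norm_num)
      have c3 := hb 0 1 (by norm_num) (by norm_num) (by norm_num)
      have c4 := hb 0 (-1) (by norm_num) (by norm_num) (by norm_num)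
      have c5 := hb 1 (-1) (by norm_num) (by norm_num) (by norm_num)
      have c6 := hb (-1) 1 (by norm_num) (by norm_num) (by norm_num)
      simp only [abs_le]
      refine ⟨⟨?_, ?_⟩, ⟨?_, ?_⟩, ?_, ?_⟩ <;> linarith
    · rintro h ⟨a, b⟩ hab
      rw [tri_ball x y hx hy hz] at hab
      refine le_trans (le_of_eq ?_) (hex_polar _ _ _ _ h hab)
      field_simp
      ring
  rw [hset, Measure.addHaar_preimage_linearMap _ (by rw [hdet]; exact hpos.ne'), hdet, hex_volume,
    ← ENNReal.ofReal_mul (abs_nonneg _), abs_of_pos (inv_pos.2 hpos)]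
  congr 1
  rw [div_eq_mul_inv, mul_comm]
end

section
/- Let t > 0, set s = 2t/(1+t), and let T ⊂ ℝ² be the interior of the convex hull of the three points (1,1), (1,0), (0,s). Then the Lebesgue integral ∫_T 3/(2xy(2−x−y)) d(x,y) equals (3/8)(π² + (log t)²). -/
open MeasureTheory Real

lemma aux_ftc {a b : ℝ} (hab : a ≤ b) {P g : ℝ → ℝ} (hc : ContinuousOn P (Set.Icc a b))
    (hd : ∀ x ∈ Set.Ioo a b, HasDerivAt P (g x) x) (hg : ∀ x ∈ Set.Ioo a b, 0 ≤ g x) :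
    ∫⁻ x in Set.Ioo a b, ENNReal.ofReal (g x) = ENNReal.ofReal (P b - P a) := by
  have hi : IntegrableOn g (Set.Ioc a b) :=
    intervalIntegral.integrableOn_deriv_of_nonneg hc hd hg
  have h1 := intervalIntegral.integral_eq_sub_of_hasDerivAt_of_le hab hc hd
    ((intervalIntegrable_iff_integrableOn_Ioc_of_le hab).2 hi)
  rw [← h1, intervalIntegral.integral_of_le hab, integral_Ioc_eq_integral_Ioo]
  rw [ofReal_integral_eq_lintegral_ofReal (hi.mono_set Set.Ioo_subset_Ioc_self)]
  exact (ae_restrict_iff' measurableSet_Ioo).2 (Filter.Eventually.of_forall hg)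

/-- the explicit triangle -/
lemma aux_hull (s : ℝ) (hs0 : 0 < s) (hs2 : s < 2) :
    convexHull ℝ ({((1 : ℝ), (1 : ℝ)), ((1 : ℝ), (0 : ℝ)), ((0 : ℝ), s)} : Set (ℝ × ℝ)) =
      {q : ℝ × ℝ | (0 ≤ q.1 ∧ q.1 ≤ 1) ∧ s * (1 - q.1) ≤ q.2 ∧ q.2 ≤ s * (1 - q.1) + q.1} := by
  apply Set.Subset.antisymm
  · apply convexHull_min
    · rintro q (rfl | rfl | rfl) <;> norm_num
    · rintro ⟨x, y⟩ ⟨⟨h1, h2⟩, h3, h4⟩ ⟨u, v⟩ ⟨⟨k1, k2⟩, k3, k4⟩ a b ha hb hab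
      obtain rfl : b = 1 - a := by linarith
      simp only [Prod.smul_mk, Prod.mk_add_mk, smul_eq_mul, Set.mem_ofPred_eq] at *
      refine ⟨⟨?_, ?_⟩, ?_, ?_⟩ <;> nlinarith
  · rintro ⟨x, y⟩ ⟨⟨h1, h2⟩, h3, h4⟩
    simp only at h1 h2 h3 h4
    have hconv := convex_convexHull ℝ
      ({((1 : ℝ), (1 : ℝ)), ((1 : ℝ), (0 : ℝ)), ((0 : ℝ), s)} : Set (ℝ × ℝ))
    have m1 := subset_convexHull ℝ ({((1 : ℝ), (1 : ℝ)), ((1 : ℝ), (0 : ℝ)), ((0 : ℝ), s)} : Set (ℝ × ℝ))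
      (show ((1 : ℝ), (1 : ℝ)) ∈ _ by simp)
    have m2 := subset_convexHull ℝ ({((1 : ℝ), (1 : ℝ)), ((1 : ℝ), (0 : ℝ)), ((0 : ℝ), s)} : Set (ℝ × ℝ))
      (show ((1 : ℝ), (0 : ℝ)) ∈ _ by simp)
    have m3 := subset_convexHull ℝ ({((1 : ℝ), (1 : ℝ)), ((1 : ℝ), (0 : ℝ)), ((0 : ℝ), s)} : Set (ℝ × ℝ))
      (show ((0 : ℝ), s) ∈ _ by simp)
    have := hconv.sum_mem (t := (Finset.univ : Finset (Fin 3)))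
      (w := ![y - s * (1 - x), x - (y - s * (1 - x)), 1 - x])
      (z := ![((1 : ℝ), (1 : ℝ)), ((1 : ℝ), (0 : ℝ)), ((0 : ℝ), s)])
      (by intro i _; fin_cases i <;> simp <;> linarith)
      (by simp [Fin.sum_univ_three])
      (by intro i _; fin_cases i <;> [exact m1; exact m2; exact m3])
    convert this using 1
    simp [Fin.sum_univ_three]
    ring

/-- y-integral -/
lemma aux_y (s x : ℝ) (hs0 : 0 < s) (hs2 : s < 2) (hx : 0 < x) (hx1 : x < 1) :
    ∫⁻ y in Set.Icc (s * (1 - x)) (s * (1 - x) + x),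
        ENNReal.ofReal (3 / (2 * x * y * (2 - x - y))) =
      ENNReal.ofReal (3 / (2 * x * (2 - x)) *
        log (1 + 4 / (s * (2 - s)) * (x * (2 - x)) / (4 * (1 - x) ^ 2))) := by
  rw [← restrict_Ioo_eq_restrict_Icc]
  have hlo : 0 < s * (1 - x) := mul_pos hs0 (by linarith)
  have h2 : 0 < (2 - s) * (1 - x) := mul_pos (by linarith) (by linarith)
  have hz : 0 < 1 - x := by linarith
  have key : ∀ y ∈ Set.Icc (s * (1 - x)) (s * (1 - x) + x), 0 < y ∧ 0 < 2 - x - y := by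
    intro y hy
    constructor
    · linarith [hy.1]
    · nlinarith [hy.2]
  have hder : ∀ y ∈ Set.Icc (s * (1 - x)) (s * (1 - x) + x),
      HasDerivAt (fun y => 3 / (2 * x * (2 - x)) * (log y - log (2 - x - y)))
        (3 / (2 * x * y * (2 - x - y))) y := by
    intro y hy
    obtain ⟨h1, h3⟩ := key y hy
    have h4 : 0 < 2 - x := by linarith
    have := ((hasDerivAt_log h1.ne').sub
      ((((hasDerivAt_id y).const_sub (2 - x))).log h3.ne')).const_mul (3 / (2 * x * (2 - x)))
    refine this.congr_deriv ?_
    simp only [id]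
    field_simp
    ring
  rw [aux_ftc (by linarith) (fun y hy => (hder y hy).continuousAt.continuousWithinAt)
    (fun y hy => hder y (Set.Ioo_subset_Icc_self hy))]
  · congr 1
    rw [← mul_sub]
    congr 1
    have e1 : 0 < 2 - x - s * (1 - x) := by nlinarith
    have e2 : 2 - x - (s * (1 - x) + x) = (2 - s) * (1 - x) := by ring
    have hs2' : 0 < 2 - s := by linarith
    rw [e2, sub_sub, add_comm (log ((2 - s) * (1 - x))), ← sub_sub, sub_sub_eq_add_sub]
    rw [sub_sub]
    rw [← log_mul (by positivity) e1.ne', ← log_mul hlo.ne' h2.ne', ← log_div (by positivity) (by positivity)]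
    congr 1
    field_simp
    ring
  · intro y hy
    obtain ⟨h1, h3⟩ := key y (Set.Ioo_subset_Icc_self hy)
    positivity

/-- b-integral -/
lemma aux_b (K x : ℝ) (hK : 0 < K) (hx : 0 < x) (hx1 : x < 1) :
    ∫⁻ b in Set.Ioo 0 K, ENNReal.ofReal (3 / 2 / (4 * (1 - x) ^ 2 + b * (x * (2 - x)))) =
      ENNReal.ofReal (3 / (2 * x * (2 - x)) *
        log (1 + K * (x * (2 - x)) / (4 * (1 - x) ^ 2))) := by
  have hz : 0 < 1 - x := by linarith
  have h4 : 0 < 2 - x := by linarith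
  have hder : ∀ b ∈ Set.Icc 0 K,
      HasDerivAt (fun b => 3 / (2 * x * (2 - x)) * log (1 + b * (x * (2 - x)) / (4 * (1 - x) ^ 2)))
        (3 / 2 / (4 * (1 - x) ^ 2 + b * (x * (2 - x)))) b := by
    intro b hb
    have hb0 := hb.1
    have := (((((hasDerivAt_id b).mul_const (x * (2 - x))).div_const (4 * (1 - x) ^ 2)).const_add 1).log
      (by simp only [id]; positivity)).const_mul (3 / (2 * x * (2 - x)))
    refine this.congr_deriv ?_
    simp only [id]
    field_simp
  rw [aux_ftc hK.le (fun y hy => (hder y hy).continuousAt.continuousWithinAt)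
    (fun y hy => hder y (Set.Ioo_subset_Icc_self hy))]
  · simp
  · intro b hb
    have := hb.1
    positivity

/-- x-integral, small b -/
lemma aux_x1 (b : ℝ) (hb : 0 < b) (hb4 : b < 4) :
    ∫⁻ x in Set.Ioo (0 : ℝ) 1, ENNReal.ofReal (3 / 2 / (4 * (1 - x) ^ 2 + b * (x * (2 - x)))) =
      ENNReal.ofReal (3 / 2 * (arccos (√b / 2) / (√b * √(4 - b)))) := by
  have hc : 0 < √b := sqrt_pos.2 hb
  have hd : 0 < √(4 - b) := sqrt_pos.2 (by linarith)
  have hc2 : √b ^ 2 = b := sq_sqrt hb.le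
  have hd2 : √(4 - b) ^ 2 = 4 - b := sq_sqrt (by linarith)
  have hpos : ∀ x : ℝ, 0 < 4 * (1 - x) ^ 2 + b * (x * (2 - x)) := by
    intro x
    have : 4 * (1 - x) ^ 2 + b * (x * (2 - x)) = b + (4 - b) * (1 - x) ^ 2 := by ring
    rw [this]
    have : 0 < 4 - b := by linarith
    positivity
  have hder : ∀ x : ℝ,
      HasDerivAt (fun x => -(3 / 2 * (arctan (√(4 - b) / √b * (1 - x)) / (√b * √(4 - b)))))
        (3 / 2 / (4 * (1 - x) ^ 2 + b * (x * (2 - x)))) x := by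
    intro x
    have := (((((((hasDerivAt_id x).const_sub 1)).const_mul (√(4 - b) / √b)).arctan).div_const
      (√b * √(4 - b))).const_mul (3 / 2)).neg
    refine this.congr_deriv ?_
    simp only [id]
    have h1 : 4 * (1 - x) ^ 2 + b * (x * (2 - x)) = √b ^ 2 * (1 + (√(4 - b) / √b * (1 - x)) ^ 2) := by
      rw [mul_pow, div_pow, hd2]
      field_simp
      rw [hc2]; ring
    rw [h1]
    have : 0 < 1 + (√(4 - b) / √b * (1 - x)) ^ 2 := by positivity
    generalize 1 + (√(4 - b) / √b * (1 - x)) ^ 2 = w at *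
    field_simp
  rw [aux_ftc zero_le_one (fun y hy => (hder y).continuousAt.continuousWithinAt)
    (fun y hy => hder y)]
  · rw [arccos_eq_arctan (by positivity)]
    have : √(1 - (√b / 2) ^ 2) / (√b / 2) = √(4 - b) / √b := by
      rw [div_pow, hc2, show 1 - b / 2 ^ 2 = (4 - b) / 2 ^ 2 by ring, sqrt_div' _ (by positivity),
        sqrt_sq (by norm_num)]
      field_simp
    rw [this]
    simp
  · intro x hx
    have := hpos x
    positivity

/-- x-integral, large b -/
lemma aux_x2 (b : ℝ) (hb4 : 4 < b) :
    ∫⁻ x in Set.Ioo (0 : ℝ) 1, ENNReal.ofReal (3 / 2 / (4 * (1 - x) ^ 2 + b * (x * (2 - x)))) =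
      ENNReal.ofReal (3 / 2 * (log ((√b + √(b - 4)) / 2) / (√b * √(b - 4)))) := by
  have hb : 0 < b := by linarith
  have hc : 0 < √b := sqrt_pos.2 hb
  have hd : 0 < √(b - 4) := sqrt_pos.2 (by linarith)
  have hc2 : √b ^ 2 = b := sq_sqrt hb.le
  have hd2 : √(b - 4) ^ 2 = b - 4 := sq_sqrt (by linarith)
  have hlt : √(b - 4) < √b := sqrt_lt_sqrt (by linarith) (by linarith)
  set c := √b
  set d := √(b - 4)
  have hden : ∀ x : ℝ, 4 * (1 - x) ^ 2 + b * (x * (2 - x)) = (c - d * (1 - x)) * (c + d * (1 - x)) := by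
    intro x
    linear_combination (-1) * hc2 + (1 - x) ^ 2 * hd2
  have key : ∀ x ∈ Set.Icc (0 : ℝ) 1, 0 < c - d * (1 - x) ∧ 0 < c + d * (1 - x) := by
    intro x hx
    have := hx.1
    have := hx.2
    constructor <;> nlinarith
  have hder : ∀ x ∈ Set.Icc (0 : ℝ) 1,
      HasDerivAt (fun x => 3 / 4 * ((log (c - d * (1 - x)) - log (c + d * (1 - x))) / (c * d)))
        (3 / 2 / (4 * (1 - x) ^ 2 + b * (x * (2 - x)))) x := by
    intro x hx
    obtain ⟨h1, h2⟩ := key x hx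
    have h3 := (((hasDerivAt_id x).const_sub 1).const_mul d)
    have := ((((h3.const_sub c).log h1.ne').sub ((h3.const_add c).log h2.ne')).div_const
      (c * d)).const_mul (3 / 4)
    refine this.congr_deriv ?_
    rw [hden]
    simp only [id]
    field_simp
    ring
  rw [aux_ftc zero_le_one (fun y hy => (hder y hy).continuousAt.continuousWithinAt)
    (fun y hy => hder y (Set.Ioo_subset_Icc_self hy))]
  · congr 1
    have hcd : 0 < c - d := by linarith
    have h1 : log (c - d) = log 2 + log 2 - log (c + d) := by
      rw [← log_mul (by norm_num) (by norm_num), ← log_div (by norm_num) (by positivity)]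
      congr 1
      field_simp
      linear_combination hc2 - hd2
    rw [log_div (by positivity) (by norm_num)]
    simp only [sub_zero, mul_one, sub_self, mul_zero, add_zero, zero_div, zero_sub, h1]
    field_simp
    ring
  · intro x hx
    obtain ⟨h1, h2⟩ := key x (Set.Ioo_subset_Icc_self hx)
    rw [hden]
    positivity

lemma aux_f1 : ∫⁻ b in Set.Ioo (0 : ℝ) 4, ENNReal.ofReal (3 / 2 * (arccos (√b / 2) / (√b * √(4 - b)))) =
    ENNReal.ofReal (3 / 8 * π ^ 2) := by
  rw [aux_ftc (P := fun b => -(3 / 2 * (arccos (√b / 2)) ^ 2)) (by norm_num)]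
  · congr 1
    have : √4 = (2 : ℝ) := by
      rw [show (4 : ℝ) = 2 ^ 2 by norm_num]; exact sqrt_sq (by norm_num)
    simp [this]
    ring
  · exact (continuous_const.mul ((continuous_arccos.comp
      (continuous_sqrt.div_const 2)).pow 2)).neg.continuousOn
  · intro b hb
    have hb0 := hb.1
    have hb4 := hb.2
    have hc : 0 < √b := sqrt_pos.2 hb.1
    have hd : 0 < √(4 - b) := sqrt_pos.2 (by linarith)
    have hc2 : √b ^ 2 = b := sq_sqrt hb0.le
    have hlt : √b < 2 := by
      nlinarith
    have h1 := (hasDerivAt_sqrt hb0.ne').div_const 2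
    have h2 := (((((hasDerivAt_arccos (x := √b / 2) (by linarith) (by linarith)).comp b h1).pow 2)).const_mul (3 / 2)).neg
    refine h2.congr_deriv ?_
    have : √(1 - (√b / 2) ^ 2) = √(4 - b) / 2 := by
      rw [div_pow, hc2, show 1 - b / 2 ^ 2 = (4 - b) / 2 ^ 2 by ring, sqrt_div' _ (by positivity),
        sqrt_sq (by norm_num)]
    rw [this]
    simp
    field_simp
  · intro b hb
    have := arccos_nonneg (√b / 2)
    positivity

lemma aux_f2 (K : ℝ) (hK : 4 ≤ K) :
    ∫⁻ b in Set.Ioo (4 : ℝ) K, ENNReal.ofReal (3 / 2 * (log ((√b + √(b - 4)) / 2) / (√b * √(b - 4)))) =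
    ENNReal.ofReal (3 / 2 * log ((√K + √(K - 4)) / 2) ^ 2) := by
  have h4 : √4 = (2 : ℝ) := by
    rw [show (4 : ℝ) = 2 ^ 2 by norm_num]; exact sqrt_sq (by norm_num)
  have hge : ∀ b : ℝ, 4 ≤ b → 2 ≤ √b := by
    intro b hb
    rw [← h4]; exact sqrt_le_sqrt hb
  rw [aux_ftc (P := fun b => (3 / 2 * log ((√b + √(b - 4)) / 2) ^ 2)) hK]
  · congr 1
    simp [h4]
  · apply ContinuousOn.mul continuousOn_const
    apply ContinuousOn.pow
    apply ContinuousOn.log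
    · fun_prop
    · intro b hb
      have := hge b hb.1
      positivity
  · intro b hb
    have hb0 : 0 < b := by linarith [hb.1]
    have hb4 : 0 < b - 4 := by linarith [hb.1]
    have hc : 0 < √b := sqrt_pos.2 hb0
    have hd : 0 < √(b - 4) := sqrt_pos.2 hb4
    have h1 := (hasDerivAt_sqrt hb0.ne')
    have h2 := ((hasDerivAt_id b).sub_const 4).sqrt hb4.ne'
    have h3 := (((((h1.add h2).div_const 2).log (by simp only [id, Pi.add_apply]; positivity)).pow 2)).const_mul (3 / 2)
    refine h3.congr_deriv ?_
    simp
    field_simp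
    ring
  · intro b hb
    have := hge b hb.1.le
    have : 0 ≤ log ((√b + √(b - 4)) / 2) := log_nonneg (by linarith [sqrt_nonneg (b - 4)])
    positivity

lemma aux_end (t : ℝ) (ht : 0 < t) :
    log ((√((1 + t) ^ 2 / t) + √((1 + t) ^ 2 / t - 4)) / 2) ^ 2 = log t ^ 2 / 4 := by
  have e : (1 + t) ^ 2 / t - 4 = (1 - t) ^ 2 / t := by field_simp; ring
  have hs : 0 < √t := sqrt_pos.2 ht
  rw [e, sqrt_div' _ ht.le, sqrt_div' _ ht.le, sqrt_sq_eq_abs, sqrt_sq_eq_abs,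
    abs_of_pos (by linarith : 0 < 1 + t)]
  rcases le_total t 1 with h | h
  · rw [abs_of_nonneg (by linarith)]
    rw [show ((1 + t) / √t + (1 - t) / √t) / 2 = (√t)⁻¹ by field_simp; ring, log_inv, log_sqrt ht.le]
    ring
  · rw [abs_of_nonpos (by linarith)]
    rw [show ((1 + t) / √t + -(1 - t) / √t) / 2 = t / √t by field_simp; ring,
      log_div ht.ne' hs.ne', log_sqrt ht.le]
    ring

theorem stmt2 (t : ℝ) (ht : 0 < t) :
    (∫ q in interior (convexHull ℝ
        ({((1 : ℝ), (1 : ℝ)), ((1 : ℝ), (0 : ℝ)), ((0 : ℝ), 2 * t / (1 + t))} : Set (ℝ × ℝ))),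
      3 / (2 * q.1 * q.2 * (2 - q.1 - q.2))) =
    (3 / 8) * (π ^ 2 + Real.log t ^ 2) := by
  have hs0 : 0 < 2 * t / (1 + t) := by positivity
  have hs2 : 2 * t / (1 + t) < 2 := by
    rw [div_lt_iff₀ (by positivity)]; linarith
  have hsK : 4 / (2 * t / (1 + t) * (2 - 2 * t / (1 + t))) = (1 + t) ^ 2 / t := by
    have : 2 - 2 * t / (1 + t) = 2 / (1 + t) := by field_simp; ring
    rw [this]; field_simp; ring
  have hK4 : 4 ≤ (1 + t) ^ 2 / t := by
    rw [le_div_iff₀ ht]; nlinarith [sq_nonneg (1 - t)]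
  have hend := aux_end t ht
  have hK0 : 0 < (1 + t) ^ 2 / t := by positivity
  have hfr : (interior (convexHull ℝ
        ({((1 : ℝ), (1 : ℝ)), ((1 : ℝ), (0 : ℝ)), ((0 : ℝ), 2 * t / (1 + t))} : Set (ℝ × ℝ)))) =ᵐ[volume]
      (convexHull ℝ
        ({((1 : ℝ), (1 : ℝ)), ((1 : ℝ), (0 : ℝ)), ((0 : ℝ), 2 * t / (1 + t))} : Set (ℝ × ℝ))) :=
    interior_ae_eq_of_null_frontier ((convex_convexHull ℝ _).addHaar_frontier volume)
  rw [setIntegral_congr_set hfr, aux_hull _ hs0 hs2]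
  generalize 2 * t / (1 + t) = s at *
  generalize (1 + t) ^ 2 / t = K at *
  set C : Set (ℝ × ℝ) :=
    {q : ℝ × ℝ | (0 ≤ q.1 ∧ q.1 ≤ 1) ∧ s * (1 - q.1) ≤ q.2 ∧ q.2 ≤ s * (1 - q.1) + q.1} with hC
  have hCm : MeasurableSet C := by
    apply MeasurableSet.inter
    · exact (measurableSet_le measurable_const measurable_fst).inter
        (measurableSet_le measurable_fst measurable_const)
    · exact (measurableSet_le (by fun_prop) measurable_snd).inter
        (measurableSet_le measurable_snd (by fun_prop))
  have hFm : Measurable (fun q : ℝ × ℝ => 3 / (2 * q.1 * q.2 * (2 - q.1 - q.2))) := by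
    fun_prop
  rw [integral_eq_lintegral_of_nonneg_ae]
  rotate_left
  · refine (ae_restrict_iff' hCm).2 (Filter.Eventually.of_forall ?_)
    rintro ⟨x, y⟩ ⟨⟨h1, h2⟩, h3, h4⟩
    simp only [Pi.zero_apply] at *
    have : 0 ≤ y := by nlinarith
    have : 0 ≤ 2 - x - y := by nlinarith
    positivity
  · exact hFm.aestronglyMeasurable
  suffices h : ∫⁻ q in C, ENNReal.ofReal (3 / (2 * q.1 * q.2 * (2 - q.1 - q.2))) =
      ENNReal.ofReal ((3 / 8) * (π ^ 2 + Real.log t ^ 2)) by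
    rw [h, ENNReal.toReal_ofReal (by positivity)]
  calc ∫⁻ q in C, ENNReal.ofReal (3 / (2 * q.1 * q.2 * (2 - q.1 - q.2)))
      = ∫⁻ x in Set.Icc (0 : ℝ) 1, ∫⁻ y in Set.Icc (s * (1 - x)) (s * (1 - x) + x),
        ENNReal.ofReal (3 / (2 * x * y * (2 - x - y))) := by
        rw [← lintegral_indicator hCm, Measure.volume_eq_prod,
          lintegral_prod _ ((hFm.ennreal_ofReal.indicator hCm).aemeasurable),
          ← lintegral_indicator measurableSet_Icc]
        refine lintegral_congr fun x => ?_
        by_cases hx : x ∈ Set.Icc (0 : ℝ) 1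
        · rw [Set.indicator_of_mem hx, ← lintegral_indicator measurableSet_Icc]
          refine lintegral_congr fun y => ?_
          have : (x, y) ∈ C ↔ y ∈ Set.Icc (s * (1 - x)) (s * (1 - x) + x) :=
            ⟨fun h => h.2, fun h => ⟨hx, h⟩⟩
          simp only [Set.indicator_apply, this]
        · rw [Set.indicator_of_notMem hx]
          have : ∀ y, (x, y) ∉ C := fun y h => hx h.1
          simp [Set.indicator_apply, this]
    _ = ∫⁻ x in Set.Ioo (0 : ℝ) 1, ∫⁻ b in Set.Ioo 0 K,
          ENNReal.ofReal (3 / 2 / (4 * (1 - x) ^ 2 + b * (x * (2 - x)))) := by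
        rw [← restrict_Ioo_eq_restrict_Icc]
        refine setLIntegral_congr_fun measurableSet_Ioo fun x hx => ?_
        rw [aux_y s x hs0 hs2 hx.1 hx.2, aux_b K x hK0 hx.1 hx.2, hsK]
    _ = ∫⁻ b in Set.Ioo 0 K, ∫⁻ x in Set.Ioo (0 : ℝ) 1,
          ENNReal.ofReal (3 / 2 / (4 * (1 - x) ^ 2 + b * (x * (2 - x)))) := by
        apply lintegral_lintegral_swap
        apply Measurable.aemeasurable
        unfold Function.uncurry
        fun_prop
    _ = (∫⁻ b in Set.Ioo 0 4, ∫⁻ x in Set.Ioo (0 : ℝ) 1,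
          ENNReal.ofReal (3 / 2 / (4 * (1 - x) ^ 2 + b * (x * (2 - x))))) +
        ∫⁻ b in Set.Ioo 4 K, ∫⁻ x in Set.Ioo (0 : ℝ) 1,
          ENNReal.ofReal (3 / 2 / (4 * (1 - x) ^ 2 + b * (x * (2 - x)))) := by
        simp only [restrict_Ioo_eq_restrict_Ioc]
        rw [← lintegral_union measurableSet_Ioc (Set.Ioc_disjoint_Ioc_of_le le_rfl),
          Set.Ioc_union_Ioc_eq_Ioc (by norm_num) hK4]
    _ = ENNReal.ofReal (3 / 8 * π ^ 2) + ENNReal.ofReal (3 / 2 * log ((√K + √(K - 4)) / 2) ^ 2) := by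
        rw [← aux_f1, ← aux_f2 K hK4]
        congr 1
        · exact setLIntegral_congr_fun measurableSet_Ioo fun b hb => aux_x1 b hb.1 hb.2
        · exact setLIntegral_congr_fun measurableSet_Ioo fun b hb => aux_x2 b hb.1
    _ = _ := by
        rw [hend, ← ENNReal.ofReal_add (by positivity) (by positivity)]
        congr 1
        ring
end

section
/- The Lebesgue integral of the function (x,y) ↦ 1/(x·y·(2−x−y)) over the open region {(x,y) ∈ ℝ² : 0 < x < 1 and 1−x < y < 1} equals π²/4. -/
open MeasureTheory Real

lemma lint_ftc (F f : ℝ → ℝ) (a b : ℝ) (hab : a ≤ b) (hc : ContinuousOn F (Set.Icc a b))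
    (hd : ∀ x ∈ Set.Ioo a b, HasDerivAt F (f x) x) (hn : ∀ x ∈ Set.Ioo a b, 0 ≤ f x) :
    ∫⁻ x in Set.Ioo a b, ENNReal.ofReal (f x) = ENNReal.ofReal (F b - F a) := by
  have hi : IntegrableOn f (Set.Ioc a b) :=
    intervalIntegral.integrableOn_deriv_of_nonneg hc hd hn
  have hI : ∫ x in a..b, f x = F b - F a :=
    intervalIntegral.integral_eq_sub_of_hasDerivAt_of_le hab hc hd
      ((intervalIntegrable_iff_integrableOn_Ioc_of_le hab).2 hi)
  rw [← hI, intervalIntegral.integral_of_le hab, integral_Ioc_eq_integral_Ioo,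
    ofReal_integral_eq_lintegral_ofReal (hi.mono_set Set.Ioo_subset_Ioc_self)]
  exact (ae_restrict_iff' measurableSet_Ioo).2 (Filter.Eventually.of_forall hn)

lemma inner_int (x : ℝ) (h0 : 0 < x) (h1 : x < 1) :
    ∫⁻ y in Set.Ioo (1 - x) 1, ENNReal.ofReal (1 / (x * y * (2 - x - y)))
      = ENNReal.ofReal (-2 * log (1 - x) / (x * (2 - x))) := by
  rw [lint_ftc (fun y => (log y - log (2 - x - y)) / (x * (2 - x))) _ (1 - x) 1 (by linarith)]
  · congr 1
    rw [show 2 - x - 1 = 1 - x by ring, show 2 - x - (1 - x) = 1 by ring]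
    simp only [log_one]
    ring
  · intro y hy
    have h2 : y ≠ 0 := by linarith [hy.1]
    have h3 : 2 - x - y ≠ 0 := by linarith [hy.2]
    apply ContinuousAt.continuousWithinAt
    fun_prop (disch := assumption)
  · intro y hy
    have h2 : y ≠ 0 := by linarith [hy.1]
    have h3 : 2 - x - y ≠ 0 := by linarith [hy.2]
    have h4 : 2 - x ≠ 0 := by linarith
    have := (((hasDerivAt_log h2).sub
      (((hasDerivAt_id y).const_sub (2 - x)).log h3)).div_const (x * (2 - x)))
    refine this.congr_deriv ?_
    simp only [id]
    field_simp
    ring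
  · intro y hy
    have h2 : 0 < y := by linarith [hy.1]
    have h3 : 0 < 2 - x - y := by linarith [hy.2]
    positivity

lemma term_int (n : ℕ) :
    ∫⁻ x in Set.Ioo (0 : ℝ) 1, ENNReal.ofReal (-2 * log (1 - x) * (1 - x) ^ (2 * n))
      = ENNReal.ofReal (2 * (1 / (2 * n + 1 : ℝ) ^ 2)) := by
  rw [lint_ftc (fun x => 2 * ((1 - x) ^ (2 * n + 1) * log (1 - x) / (2 * n + 1)
    - (1 - x) ^ (2 * n + 1) / (2 * n + 1) ^ 2)) _ 0 1 (by norm_num)]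
  · congr 1
    simp
  · have : Continuous fun x : ℝ => (1 - x) * log (1 - x) :=
      Real.continuous_mul_log.comp (continuous_const.sub continuous_id)
    apply Continuous.continuousOn
    simp only [pow_succ, mul_assoc]
    fun_prop
  · intro x hx
    have h2 : 1 - x ≠ 0 := by linarith [hx.2]
    have h3 : (2 * n + 1 : ℝ) ≠ 0 := by positivity
    have hs := (hasDerivAt_id x).const_sub 1
    have h := (((hs.fun_pow (2 * n + 1)).mul (hs.log h2)).div_const (2 * n + 1 : ℝ)).sub
      ((hs.fun_pow (2 * n + 1)).div_const ((2 * n + 1 : ℝ) ^ 2)) |>.const_mul 2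
    refine h.congr_deriv ?_
    simp only [id, Nat.add_sub_cancel]
    push_cast
    rw [pow_succ]
    field_simp
    ring
  · intro x hx
    have := Real.log_nonpos (x := 1 - x) (by linarith [hx.2]) (by linarith [hx.1])
    have h2 : 0 ≤ 1 - x := by linarith [hx.2]
    have : 0 ≤ -2 * log (1 - x) := by linarith
    positivity

lemma odd_sum : HasSum (fun n : ℕ => 1 / (2 * n + 1 : ℝ) ^ 2) (π ^ 2 / 8) := by
  have hz := hasSum_zeta_two
  have he : HasSum (fun n : ℕ => 1 / ((2 * n : ℕ) : ℝ) ^ 2) (π ^ 2 / 6 / 4) := by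
    have h4 := hz.div_const 4
    have e : (fun n : ℕ => 1 / ((2 * n : ℕ) : ℝ) ^ 2) = fun n : ℕ => 1 / (n : ℝ) ^ 2 / 4 := by
      funext n
      push_cast
      rw [div_div]
      ring
    rw [e]
    exact h4
  have ho : Summable (fun n : ℕ => 1 / ((2 * n + 1 : ℕ) : ℝ) ^ 2) :=
    hz.summable.comp_injective (i := fun n : ℕ => 2 * n + 1) (fun a b h => by simpa using h)
  have h := HasSum.even_add_odd (f := fun n : ℕ => 1 / (n : ℝ) ^ 2) he ho.hasSum
  have h2 := h.unique hz
  have h3 := ho.hasSum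
  have h5 : (∑' n : ℕ, 1 / ((2 * n + 1 : ℕ) : ℝ) ^ 2) = π ^ 2 / 8 := by linarith
  rw [h5] at h3
  have e : (fun n : ℕ => 1 / (2 * n + 1 : ℝ) ^ 2)
      = fun n : ℕ => 1 / ((2 * n + 1 : ℕ) : ℝ) ^ 2 := by
    funext n
    push_cast
    rfl
  rw [e]
  exact h3

lemma outer_int :
    ∫⁻ x in Set.Ioo (0 : ℝ) 1, ENNReal.ofReal (-2 * log (1 - x) / (x * (2 - x)))
      = ENNReal.ofReal (π ^ 2 / 4) := by
  have h1 : ∫⁻ x in Set.Ioo (0 : ℝ) 1, ENNReal.ofReal (-2 * log (1 - x) / (x * (2 - x)))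
      = ∫⁻ x in Set.Ioo (0 : ℝ) 1,
        ∑' n : ℕ, ENNReal.ofReal (-2 * log (1 - x) * (1 - x) ^ (2 * n)) := by
    apply setLIntegral_congr_fun measurableSet_Ioo
    intro x hx
    have hl := Real.log_nonpos (x := 1 - x) (by linarith [hx.2]) (by linarith [hx.1])
    have h2 : 0 ≤ 1 - x := by linarith [hx.2]
    have h3 : 0 ≤ -2 * log (1 - x) := by linarith
    have hg := (hasSum_geometric_of_lt_one (r := (1 - x) ^ 2) (by positivity)
      (by nlinarith [hx.1, hx.2])).mul_left (-2 * log (1 - x))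
    simp only [← pow_mul] at hg
    dsimp only
    rw [← ENNReal.ofReal_tsum_of_nonneg (fun n => by positivity) hg.summable, hg.tsum_eq,
      div_eq_mul_inv]
    congr 3
    ring
  rw [h1, lintegral_tsum (fun n => by fun_prop)]
  simp only [term_int]
  have ho := odd_sum.mul_left 2
  rw [← ENNReal.ofReal_tsum_of_nonneg (fun n => by positivity) ho.summable, ho.tsum_eq]
  congr 1
  ring

theorem stmt3 :
    (∫ q in {q : ℝ × ℝ | 0 < q.1 ∧ q.1 < 1 ∧ 1 - q.1 < q.2 ∧ q.2 < 1},
      1 / (q.1 * q.2 * (2 - q.1 - q.2))) = π ^ 2 / 4 := by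
  have hm : MeasurableSet {q : ℝ × ℝ | 0 < q.1 ∧ q.1 < 1 ∧ 1 - q.1 < q.2 ∧ q.2 < 1} := by
    measurability
  have hf : Measurable fun q : ℝ × ℝ => 1 / (q.1 * q.2 * (2 - q.1 - q.2)) := by fun_prop
  rw [integral_eq_lintegral_of_nonneg_ae _ hf.aestronglyMeasurable]
  · have key : ∫⁻ q in {q : ℝ × ℝ | 0 < q.1 ∧ q.1 < 1 ∧ 1 - q.1 < q.2 ∧ q.2 < 1},
      ENNReal.ofReal (1 / (q.1 * q.2 * (2 - q.1 - q.2))) = ENNReal.ofReal (π ^ 2 / 4) := by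
      rw [← lintegral_indicator hm, Measure.volume_eq_prod,
        lintegral_prod _ ((hf.ennreal_ofReal.indicator hm).aemeasurable), ← outer_int,
        ← lintegral_indicator measurableSet_Ioo]
      congr 1
      ext x
      by_cases hx : x ∈ Set.Ioo (0 : ℝ) 1
      · rw [Set.indicator_of_mem hx, ← inner_int x hx.1 hx.2,
          ← lintegral_indicator measurableSet_Ioo]
        congr 1
        ext y
        simp only [Set.indicator, Set.mem_ofPred_eq, Set.mem_Ioo, hx.1, hx.2, true_and]
      · rw [Set.indicator_of_notMem hx]
        convert lintegral_zero with y
        apply Set.indicator_of_notMem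
        intro h
        exact hx ⟨h.1, h.2.1⟩
    rw [key, ENNReal.toReal_ofReal (by positivity)]
  · refine (ae_restrict_iff' hm).2 (Filter.Eventually.of_forall ?_)
    rintro ⟨x, y⟩ ⟨h1, h2, h3, h4⟩
    dsimp only at *
    have h5 : 0 < y := by linarith
    have h6 : 0 < 2 - x - y := by linarith
    simp only [Pi.zero_apply]
    positivity
end

section
/- Let Q₀ = (−1,1) × (−1,1) ⊂ ℝ² be the open standard square and let p = (x,y) ∈ Q₀. Then the Hilbert unit ball B_p = {ξ ∈ ℝ² : gauge(Q₀ − p)(ξ) + gauge(p − Q₀)(ξ) ≤ 2} equals the convex hull of the eight points ±η₁, ±η₂, ±η₃, ±η₄, where η₁ = (1 + min(x,y))·(1−x, 1−y), η₂ = (1 − max(x,−y))·(−(1+x), 1−y), η₃ = (1 − max(x,y))·(−(1+x), −(1+y)), and η₄ = (1 − max(y,−x))·(1−x, −(1+y)). -/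
open Pointwise

/-- The open standard square `(-1,1) × (-1,1)`. -/
def stdSquare : Set (ℝ × ℝ) := Set.Ioo (-1 : ℝ) 1 ×ˢ Set.Ioo (-1 : ℝ) 1

lemma stdSq_sub (x y : ℝ) :
    stdSquare - {(x, y)} = Set.Ioo (-1 - x) (1 - x) ×ˢ Set.Ioo (-1 - y) (1 - y) := by
  ext ⟨u, v⟩
  simp only [stdSquare, Set.sub_singleton, Set.mem_image, Set.mem_prod, Set.mem_Ioo, Prod.exists,
    Prod.mk_sub_mk, Prod.mk.injEq]
  constructor
  · rintro ⟨a, b, ⟨⟨h1, h2⟩, h3, h4⟩, rfl, rfl⟩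
    refine ⟨⟨?_, ?_⟩, ?_, ?_⟩ <;> linarith
  · rintro ⟨⟨h1, h2⟩, h3, h4⟩
    refine ⟨u + x, v + y, ⟨⟨?_, ?_⟩, ?_, ?_⟩, ?_, ?_⟩ <;> linarith

lemma sub_stdSq (x y : ℝ) :
    {(x, y)} - stdSquare = stdSquare - {(-x, -y)} := by
  rw [stdSq_sub]
  ext ⟨u, v⟩
  simp only [stdSquare, Set.singleton_sub, Set.mem_image, Set.mem_prod, Set.mem_Ioo, Prod.exists,
    Prod.mk_sub_mk, Prod.mk.injEq]
  constructor
  · rintro ⟨a, b, ⟨⟨h1, h2⟩, h3, h4⟩, rfl, rfl⟩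
    refine ⟨⟨?_, ?_⟩, ?_, ?_⟩ <;> linarith
  · rintro ⟨⟨h1, h2⟩, h3, h4⟩
    refine ⟨x - u, y - v, ⟨⟨?_, ?_⟩, ?_, ?_⟩, ?_, ?_⟩ <;> linarith

lemma mem_smul_sq (x y t u v : ℝ) (ht : 0 < t) :
    (u, v) ∈ t • (stdSquare - {(x, y)}) ↔
      (t * (-1 - x) < u ∧ u < t * (1 - x)) ∧ (t * (-1 - y) < v ∧ v < t * (1 - y)) := by
  rw [Set.mem_smul_set_iff_inv_smul_mem₀ ht.ne', stdSq_sub]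
  simp only [Prod.smul_mk, smul_eq_mul, Set.mem_prod, Set.mem_Ioo]
  rw [lt_inv_mul_iff₀ ht, lt_inv_mul_iff₀ ht, inv_mul_lt_iff₀ ht, inv_mul_lt_iff₀ ht]

lemma gauge_upper (x y t u v : ℝ) (hx : -1 < x) (hx' : x < 1) (hy : -1 < y) (hy' : y < 1)
    (ht : 0 ≤ t) (h1 : t * (-1 - x) ≤ u) (h2 : u ≤ t * (1 - x))
    (h3 : t * (-1 - y) ≤ v) (h4 : v ≤ t * (1 - y)) :
    gauge (stdSquare - {(x, y)}) (u, v) ≤ t := by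
  apply le_of_forall_pos_le_add
  intro e he
  apply gauge_le_of_mem (by linarith)
  rw [mem_smul_sq _ _ _ _ _ (by linarith)]
  refine ⟨⟨?_, ?_⟩, ?_, ?_⟩ <;> nlinarith

lemma gauge_lower (x y u v : ℝ) (hx : -1 < x) (hx' : x < 1) (hy : -1 < y) (hy' : y < 1)
    (t : ℝ) (ht : gauge (stdSquare - {(x, y)}) (u, v) ≤ t) :
    t * (-1 - x) ≤ u ∧ u ≤ t * (1 - x) ∧ t * (-1 - y) ≤ v ∧ v ≤ t * (1 - y) := by
  have habs : Absorbent ℝ (stdSquare - {(x, y)}) := by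
    apply absorbent_nhds_zero
    rw [stdSq_sub]
    apply prod_mem_nhds
    · exact Ioo_mem_nhds (by simp; linarith) (by simp; linarith)
    · exact Ioo_mem_nhds (by simp; linarith) (by simp; linarith)
  have key : ∀ e : ℝ, 0 < e → (t + e) * (-1 - x) ≤ u ∧ u ≤ (t + e) * (1 - x) ∧
      (t + e) * (-1 - y) ≤ v ∧ v ≤ (t + e) * (1 - y) := by
    intro e he
    obtain ⟨b, hb, hbt, hm⟩ := exists_lt_of_gauge_lt habs (a := t + e) (x := (u, v)) (by linarith)
    rw [mem_smul_sq _ _ _ _ _ hb] at hm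
    obtain ⟨⟨h1, h2⟩, h3, h4⟩ := hm
    refine ⟨?_, ?_, ?_, ?_⟩ <;> nlinarith
  have div : ∀ c w : ℝ, 0 < c → (∀ e : ℝ, 0 < e → w ≤ (t + e) * c) → w ≤ t * c := by
    intro c w hc h
    apply le_of_forall_pos_le_add
    intro e he
    have := h (e / c) (by positivity)
    have h2 : (t + e / c) * c = t * c + e := by field_simp
    linarith
  refine ⟨?_, ?_, ?_, ?_⟩
  · have := div (1 + x) (-u) (by linarith) (fun e he => by have := (key e he).1; linarith)
    linarith
  · exact div (1 - x) u (by linarith) (fun e he => (key e he).2.1)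
  · have := div (1 + y) (-v) (by linarith) (fun e he => by have := (key e he).2.2.1; linarith)
    linarith
  · exact div (1 - y) v (by linarith) (fun e he => (key e he).2.2.2)

/-- The inequalities describing the ball. -/
def BallIneq (x y u v s t : ℝ) : Prop :=
  0 ≤ s ∧ 0 ≤ t ∧ s + t ≤ 2 ∧
  s * (-1 - x) ≤ u ∧ u ≤ s * (1 - x) ∧ s * (-1 - y) ≤ v ∧ v ≤ s * (1 - y) ∧
  t * (-1 + x) ≤ u ∧ u ≤ t * (1 + x) ∧ t * (-1 + y) ≤ v ∧ v ≤ t * (1 + y)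

lemma mem_ball_iff_s4 (x y u v : ℝ) (hx : -1 < x) (hx' : x < 1) (hy : -1 < y) (hy' : y < 1) :
    (u, v) ∈ hilbertUnitBall stdSquare (x, y) ↔ ∃ s t, BallIneq x y u v s t := by
  unfold hilbertUnitBall
  rw [sub_stdSq, Set.mem_setOf_eq]
  constructor
  · intro h
    have h1 := gauge_lower x y u v hx hx' hy hy' _ le_rfl
    have h2 := gauge_lower (-x) (-y) u v (by linarith) (by linarith) (by linarith)
      (by linarith) _ le_rfl
    simp only [sub_neg_eq_add] at h2
    exact ⟨_, _, gauge_nonneg _, gauge_nonneg _, h, h1.1, h1.2.1, h1.2.2.1, h1.2.2.2, h2⟩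
  · rintro ⟨s, t, hs, ht, hst, h1, h2, h3, h4, h5, h6, h7, h8⟩
    have a := gauge_upper x y s u v hx hx' hy hy' hs h1 h2 h3 h4
    have b := gauge_upper (-x) (-y) t u v (by linarith) (by linarith) (by linarith)
      (by linarith) ht (by linarith) (by linarith) (by linarith) (by linarith)
    linarith

lemma ball_convex (x y : ℝ) (hx : -1 < x) (hx' : x < 1) (hy : -1 < y) (hy' : y < 1) :
    Convex ℝ (hilbertUnitBall stdSquare (x, y)) := by
  rintro ⟨u, v⟩ h ⟨u', v'⟩ h' a b ha hb hab
  simp only [Prod.smul_mk, smul_eq_mul, Prod.mk_add_mk]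
  rw [mem_ball_iff_s4 _ _ _ _ hx hx' hy hy'] at h h' ⊢
  obtain ⟨s, t, hs, ht, hst, h1, h2, h3, h4, h5, h6, h7, h8⟩ := h
  obtain ⟨s', t', hs', ht', hst', k1, k2, k3, k4, k5, k6, k7, k8⟩ := h'
  have comb : ∀ p q p' q' : ℝ, p ≤ q → p' ≤ q' → a * p + b * p' ≤ a * q + b * q' := by
    intro p q p' q' h h'
    gcongr
  refine ⟨a * s + b * s', a * t + b * t', by positivity, by positivity, ?_, ?_, ?_, ?_, ?_, ?_,
    ?_, ?_, ?_⟩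
  · linarith [comb _ _ _ _ hst hst']
  · linarith [comb _ _ _ _ h1 k1]
  · linarith [comb _ _ _ _ h2 k2]
  · linarith [comb _ _ _ _ h3 k3]
  · linarith [comb _ _ _ _ h4 k4]
  · linarith [comb _ _ _ _ h5 k5]
  · linarith [comb _ _ _ _ h6 k6]
  · linarith [comb _ _ _ _ h7 k7]
  · linarith [comb _ _ _ _ h8 k8]

lemma BallIneq.neg {x y u v s t : ℝ} (h : BallIneq x y u v s t) : BallIneq x y (-u) (-v) t s := by
  obtain ⟨hs, ht, hst, h1, h2, h3, h4, h5, h6, h7, h8⟩ := h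
  refine ⟨ht, hs, ?_, ?_, ?_, ?_, ?_, ?_, ?_, ?_, ?_⟩ <;> linarith

lemma BallIneq.flip {x y u v s t : ℝ} (h : BallIneq x y u v s t) :
    BallIneq (-x) (-y) u v t s := by
  obtain ⟨hs, ht, hst, h1, h2, h3, h4, h5, h6, h7, h8⟩ := h
  refine ⟨ht, hs, ?_, ?_, ?_, ?_, ?_, ?_, ?_, ?_, ?_⟩ <;> linarith

lemma BallIneq.swap {x y u v s t : ℝ} (h : BallIneq x y u v s t) :
    BallIneq y x v u s t := by
  obtain ⟨hs, ht, hst, h1, h2, h3, h4, h5, h6, h7, h8⟩ := h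
  exact ⟨hs, ht, hst, h3, h4, h1, h2, h7, h8, h5, h6⟩

/-- A point of a cone below the line through two points of `K` lies in `K`. -/
lemma cone_mem (K : Set (ℝ × ℝ)) (hK : Convex ℝ K) (h0 : ((0, 0) : ℝ × ℝ) ∈ K)
    (a b c d u v p q : ℝ) (hr : (a, b) ∈ K) (hs : (c, d) ∈ K)
    (hD : 0 < a * d - b * c) (h1 : 0 ≤ u * d - v * c) (h2 : 0 ≤ a * v - b * u)
    (e1 : p * a + q * b = 1) (e2 : p * c + q * d = 1) (e3 : p * u + q * v ≤ 1) :
    (u, v) ∈ K := by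
  set D := a * d - b * c with hDdef
  have hDn := hD.ne'
  have hu : u = (u * d - v * c) / D * a + (a * v - b * u) / D * c := by
    field_simp; rw [hDdef]; ring
  have hv : v = (u * d - v * c) / D * b + (a * v - b * u) / D * d := by
    field_simp; rw [hDdef]; ring
  set α := (u * d - v * c) / D with hα
  set β := (a * v - b * u) / D with hβ
  have hα0 : 0 ≤ α := by positivity
  have hβ0 : 0 ≤ β := by positivity
  clear_value α β
  have hs1 : α + β ≤ 1 := by
    have : p * u + q * v = α * (p * a + q * b) + β * (p * c + q * d) := by
      conv_lhs => rw [hu, hv]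
      ring
    rw [e1, e2] at this
    linarith
  have hsum : (α • ((a, b) : ℝ × ℝ) + β • (c, d)) + (1 - α - β) • ((0, 0) : ℝ × ℝ) ∈ K := by
    have := hK.sum_mem (t := Finset.univ) (w := ![α, β, 1 - α - β])
      (z := ![((a, b) : ℝ × ℝ), (c, d), (0, 0)])
      (by intro i _; fin_cases i <;> simp <;> linarith)
      (by simp [Fin.sum_univ_three])
      (by intro i _; fin_cases i <;> simp [hr, hs, h0])
    simpa [Fin.sum_univ_three] using this
  have : (u, v) = (α • ((a, b) : ℝ × ℝ) + β • (c, d)) + (1 - α - β) • ((0, 0) : ℝ × ℝ) := by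
    ext
    · simpa using hu
    · simpa using hv
  rw [this]; exact hsum

set_option maxHeartbeats 2000000 in
/-- Upper half of the octagon when `|y| ≤ x`. -/
lemma half_oct (K : Set (ℝ × ℝ)) (hK : Convex ℝ K) (h0 : ((0, 0) : ℝ × ℝ) ∈ K)
    (x y u v : ℝ) (hx' : x < 1) (hy : -1 < y) (hy' : y < 1)
    (hxy : y ≤ x) (hxy' : -y ≤ x)
    (m1 : ((1 + y) * (1 - x), (1 + y) * (1 - y)) ∈ K)
    (m2 : (-((1 - x) * (1 + x)), (1 - x) * (1 - y)) ∈ K)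
    (m3 : ((1 - x) * (1 + x), (1 - x) * (1 + y)) ∈ K)
    (m4 : (-((1 - y) * (1 - x)), (1 - y) * (1 + y)) ∈ K)
    (m5 : (-((1 - x) * (1 + x)), -((1 - x) * (1 + y))) ∈ K)
    (m6 : ((1 - x) * (1 + x), -((1 - x) * (1 - y))) ∈ K)
    (hv : 0 ≤ v) (s t : ℝ) (h : BallIneq x y u v s t) : (u, v) ∈ K := by
  obtain ⟨hs, ht, hst, h1, h2, h3, h4, h5, h6, h7, h8⟩ := h
  have X : 0 < 1 - x := by linarith
  have X' : 0 < 1 + x := by linarith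
  have Y : 0 < 1 - y := by linarith
  have Y' : 0 < 1 + y := by linarith
  have bnd : ∀ a b w z : ℝ, 0 < a → 0 < b → w ≤ s * a → z ≤ t * b → w / a + z / b ≤ 2 := by
    intro a b w z ha hb h h'
    have := (div_le_iff₀ ha).2 h
    have := (div_le_iff₀ hb).2 h'
    linarith
  have i1 := bnd (1 - x) (1 + x) u u X X' h2 h6
  have i2 := bnd (1 - x) (1 + y) u v X Y' h2 h8
  have i3 := bnd (1 - y) (1 + y) v v Y Y' h4 h8
  have i4 := bnd (1 - y) (1 - x) v (-u) Y X h4 (by linarith)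
  have i5 := bnd (1 + x) (1 - x) (-u) (-u) X' X (by linarith) (by linarith)
  -- cone from `m6` to `m3`
  rcases le_or_gt ((1 + x) * v) ((1 + y) * u) with c1 | c1
  · have hu : 0 ≤ u := by
      by_contra hu
      push Not at hu
      nlinarith
    refine cone_mem K hK h0 _ _ _ _ u v (1 / ((1 - x) * (1 + x))) 0 m6 m3 ?_ ?_ ?_ ?_ ?_ ?_
    · have : 0 < (1 - x) * (1 - x) * (1 + x) := by positivity
      nlinarith
    · nlinarith
    · have : 0 ≤ (1 - x) * ((1 + x) * v + (1 - y) * u) := by positivity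
      linarith
    · field_simp; ring
    · field_simp; ring
    · have : u / (1 - x) + u / (1 + x) = 2 * (1 / ((1 - x) * (1 + x)) * u + 0 * v) := by
        field_simp; ring
      linarith
  rcases lt_or_ge ((1 - x) * v) ((1 - y) * u) with c2 | c2
  · have hne : y < x := by
      rcases hxy.lt_or_eq with h | h
      · exact h
      · subst h
        nlinarith
    refine cone_mem K hK h0 _ _ _ _ u v (1 / (2 * (1 - x))) (1 / (2 * (1 + y))) m3 m1
      ?_ ?_ ?_ ?_ ?_ ?_
    · have : 0 < (1 - x) * (1 + y) * (2 * (x - y)) := by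
        have : 0 < x - y := by linarith
        positivity
      nlinarith
    · nlinarith
    · nlinarith
    · field_simp; ring
    · field_simp; ring
    · have : u / (1 - x) + v / (1 + y) = 2 * (1 / (2 * (1 - x)) * u + 1 / (2 * (1 + y)) * v) := by
        field_simp
      linarith
  rcases le_or_gt 0 ((1 - x) * v + (1 + y) * u) with c3 | c3
  · refine cone_mem K hK h0 _ _ _ _ u v 0 (1 / ((1 - y) * (1 + y))) m1 m4 ?_ ?_ ?_ ?_ ?_ ?_
    · have : 0 < (1 - x) * (1 + y) * (1 - y) := by positivity
      nlinarith
    · nlinarith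
    · nlinarith
    · field_simp; ring
    · field_simp; ring
    · have : v / (1 - y) + v / (1 + y) = 2 * (0 * u + 1 / ((1 - y) * (1 + y)) * v) := by
        field_simp; ring
      linarith
  rcases lt_or_ge 0 ((1 + x) * v + (1 - y) * u) with c4 | c4
  · have hne : -y < x := by
      rcases hxy'.lt_or_eq with h | h
      · exact h
      · subst h
        nlinarith
    refine cone_mem K hK h0 _ _ _ _ u v (-(1 / (2 * (1 - x)))) (1 / (2 * (1 - y))) m4 m2
      ?_ ?_ ?_ ?_ ?_ ?_
    · have : 0 < (1 - x) * (1 - y) * (2 * (x + y)) := by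
        have : 0 < x + y := by linarith
        positivity
      nlinarith
    · nlinarith
    · nlinarith
    · field_simp; ring
    · field_simp; ring
    · have : v / (1 - y) + -u / (1 - x) =
          2 * (-(1 / (2 * (1 - x))) * u + 1 / (2 * (1 - y)) * v) := by
        field_simp; ring
      linarith
  · have hu : u ≤ 0 := by
      by_contra hu
      push Not at hu
      nlinarith
    refine cone_mem K hK h0 _ _ _ _ u v (-(1 / ((1 - x) * (1 + x)))) 0 m2 m5 ?_ ?_ ?_ ?_ ?_ ?_
    · have : 0 < (1 - x) * (1 - x) * (1 + x) := by positivity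
      nlinarith
    · have : 0 ≤ (1 - x) * ((1 + x) * v + (1 + y) * (-u)) := by
        have : 0 ≤ -u := by linarith
        positivity
      linarith
    · nlinarith
    · field_simp; ring
    · field_simp; ring
    · have : -u / (1 + x) + -u / (1 - x) = 2 * (-(1 / ((1 - x) * (1 + x))) * u + 0 * v) := by
        field_simp; ring
      linarith

/-- Full octagon when `|y| ≤ x`. -/
lemma full_oct (K : Set (ℝ × ℝ)) (hK : Convex ℝ K) (hn : ∀ u v, (u, v) ∈ K → (-u, -v) ∈ K)
    (x y u v : ℝ) (hx' : x < 1) (hy : -1 < y) (hy' : y < 1)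
    (hxy : y ≤ x) (hxy' : -y ≤ x)
    (m1 : ((1 + y) * (1 - x), (1 + y) * (1 - y)) ∈ K)
    (m2 : (-((1 - x) * (1 + x)), (1 - x) * (1 - y)) ∈ K)
    (m3 : ((1 - x) * (1 + x), (1 - x) * (1 + y)) ∈ K)
    (m4 : (-((1 - y) * (1 - x)), (1 - y) * (1 + y)) ∈ K)
    (s t : ℝ) (h : BallIneq x y u v s t) : (u, v) ∈ K := by
  have h0 : ((0, 0) : ℝ × ℝ) ∈ K := by
    have := hK m1 (hn _ _ m1) (a := 1 / 2) (b := 1 / 2) (by norm_num) (by norm_num) (by norm_num)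
    simpa using this
  have m5 := hn _ _ m3
  have m6 := hn _ _ m2
  rw [neg_neg] at m6
  rcases le_total 0 v with hv | hv
  · exact half_oct K hK h0 x y u v hx' hy hy' hxy hxy' m1 m2 m3 m4 m5 m6 hv s t h
  · have := hn _ _ (half_oct K hK h0 x y (-u) (-v) hx' hy hy' hxy hxy' m1 m2 m3 m4 m5 m6
      (by linarith) t s h.neg)
    simpa using this

/-- Full octagon when `|x| ≤ y`. -/
lemma full_oct' (K : Set (ℝ × ℝ)) (hK : Convex ℝ K) (hn : ∀ u v, (u, v) ∈ K → (-u, -v) ∈ K)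
    (x y u v : ℝ) (hy' : y < 1) (hx : -1 < x) (hx' : x < 1)
    (hxy : x ≤ y) (hxy' : -x ≤ y)
    (m1 : ((1 + x) * (1 - x), (1 + x) * (1 - y)) ∈ K)
    (m2 : ((1 - y) * (1 - x), -((1 - y) * (1 + y))) ∈ K)
    (m3 : ((1 - y) * (1 + x), (1 - y) * (1 + y)) ∈ K)
    (m4 : ((1 - x) * (1 + x), -((1 - x) * (1 - y))) ∈ K)
    (s t : ℝ) (h : BallIneq x y u v s t) : (u, v) ∈ K := by
  have hK' : Convex ℝ {z : ℝ × ℝ | (z.2, z.1) ∈ K} := by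
    intro z hz w hw a b ha hb hab
    exact hK hz hw ha hb hab
  exact full_oct {z : ℝ × ℝ | (z.2, z.1) ∈ K} hK' (fun u v h => hn _ _ h) y x v u hy' hx hx'
    hxy hxy' m1 m2 m3 m4 s t h.swap

theorem stmt4 (x y : ℝ) (hp : (x, y) ∈ stdSquare) :
    hilbertUnitBall stdSquare (x, y) =
      convexHull ℝ
        ({(1 + min x y) • ((1 - x, 1 - y) : ℝ × ℝ),
          (1 - max x (-y)) • ((-(1 + x), 1 - y) : ℝ × ℝ),
          (1 - max x y) • ((-(1 + x), -(1 + y)) : ℝ × ℝ),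
          (1 - max y (-x)) • ((1 - x, -(1 + y)) : ℝ × ℝ),
          -((1 + min x y) • ((1 - x, 1 - y) : ℝ × ℝ)),
          -((1 - max x (-y)) • ((-(1 + x), 1 - y) : ℝ × ℝ)),
          -((1 - max x y) • ((-(1 + x), -(1 + y)) : ℝ × ℝ)),
          -((1 - max y (-x)) • ((1 - x, -(1 + y)) : ℝ × ℝ))} : Set (ℝ × ℝ)) := by
  obtain ⟨⟨hx, hx'⟩, hy, hy'⟩ := hp
  simp only at hx hx' hy hy'
  apply Set.Subset.antisymm
  · rintro ⟨u, v⟩ h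
    rw [mem_ball_iff_s4 _ _ _ _ hx hx' hy hy'] at h
    obtain ⟨s, t, h⟩ := h
    set S := ({(1 + min x y) • ((1 - x, 1 - y) : ℝ × ℝ),
          (1 - max x (-y)) • ((-(1 + x), 1 - y) : ℝ × ℝ),
          (1 - max x y) • ((-(1 + x), -(1 + y)) : ℝ × ℝ),
          (1 - max y (-x)) • ((1 - x, -(1 + y)) : ℝ × ℝ),
          -((1 + min x y) • ((1 - x, 1 - y) : ℝ × ℝ)),
          -((1 - max x (-y)) • ((-(1 + x), 1 - y) : ℝ × ℝ)),
          -((1 - max x y) • ((-(1 + x), -(1 + y)) : ℝ × ℝ)),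
          -((1 - max y (-x)) • ((1 - x, -(1 + y)) : ℝ × ℝ))} : Set (ℝ × ℝ)) with hS
    have hK : Convex ℝ (convexHull ℝ S) := convex_convexHull ℝ S
    have hSn : -S = S := by
      rw [hS]
      ext z
      simp only [Set.mem_neg, Set.mem_insert_iff, Set.mem_singleton_iff, neg_inj,
        neg_eq_iff_eq_neg, neg_neg]
      tauto
    have hn : ∀ u v, (u, v) ∈ convexHull ℝ S → (-u, -v) ∈ convexHull ℝ S := by
      intro u v h
      rw [← hSn, convexHull_neg, Set.mem_neg]
      simpa using h
    have p1 : ((1 + min x y) * (1 - x), (1 + min x y) * (1 - y)) ∈ convexHull ℝ S :=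
      subset_convexHull ℝ S (by simp [hS])
    have p2 : ((1 - max x (-y)) * (-(1 + x)), (1 - max x (-y)) * (1 - y)) ∈ convexHull ℝ S :=
      subset_convexHull ℝ S (by rw [hS]; right; left; rfl)
    have p3 : ((1 - max x y) * (-(1 + x)), (1 - max x y) * (-(1 + y))) ∈ convexHull ℝ S :=
      subset_convexHull ℝ S (by rw [hS]; right; right; left; rfl)
    have p4 : ((1 - max y (-x)) * (1 - x), (1 - max y (-x)) * (-(1 + y))) ∈ convexHull ℝ S :=
      subset_convexHull ℝ S (by rw [hS]; right; right; right; left; rfl)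
    have n1 := hn _ _ p1
    have n2 := hn _ _ p2
    have n3 := hn _ _ p3
    have n4 := hn _ _ p4
    clear_value S
    rcases le_total y x with a | a <;> rcases le_total (-y) x with b | b
    · have b' : -x ≤ y := by linarith
      simp only [min_eq_right a, max_eq_left a, max_eq_left b, max_eq_left b'] at *
      refine full_oct _ hK hn x y u v hx' hy hy' a b p1 ?_ ?_ ?_ s t h
      · convert p2 using 2; ring
      · convert n3 using 2 <;> ring
      · convert n4 using 2 ; ring
    · have b' : y ≤ -x := by linarith
      simp only [min_eq_right a, max_eq_left a, max_eq_right b, max_eq_right b'] at *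
      refine full_oct' _ hK hn (-x) (-y) u v (by linarith) (by linarith) (by linarith)
        (by linarith) (by linarith) ?_ ?_ ?_ ?_ t s h.flip
      · convert n3 using 2 <;> ring
      · convert n2 using 2 <;> ring
      · convert p1 using 2 <;> ring
      · convert p4 using 2 <;> ring
    · have b' : -x ≤ y := by linarith
      simp only [min_eq_left a, max_eq_right a, max_eq_left b, max_eq_left b'] at *
      refine full_oct' _ hK hn x y u v hy' hx hx' a b' p1 ?_ ?_ ?_ s t h
      · convert p4 using 2; ring
      · convert n3 using 2 <;> ring
      · convert n2 using 2 ; ring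
    · have b' : y ≤ -x := by linarith
      simp only [min_eq_left a, max_eq_right a, max_eq_right b, max_eq_right b'] at *
      refine full_oct _ hK hn (-x) (-y) u v (by linarith) (by linarith) (by linarith)
        (by linarith) (by linarith) ?_ ?_ ?_ ?_ t s h.flip
      · convert n3 using 2 <;> ring
      · convert n4 using 2 <;> ring
      · convert p1 using 2 <;> ring
      · convert p2 using 2 <;> ring
  · apply convexHull_min _ (ball_convex x y hx hx' hy hy')
    have e1 : BallIneq x y ((1 + min x y) * (1 - x)) ((1 + min x y) * (1 - y))
        (1 + min x y) (1 - min x y) := by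
      have a1 := min_le_left x y
      have a2 := min_le_right x y
      have a3 : -1 < min x y := lt_min hx hy
      generalize min x y = m at *
      refine ⟨?_, ?_, ?_, ?_, ?_, ?_, ?_, ?_, ?_, ?_, ?_⟩ <;> nlinarith
    have e2 : BallIneq x y ((1 - max x (-y)) * (-(1 + x))) ((1 - max x (-y)) * (1 - y))
        (1 - max x (-y)) (1 + max x (-y)) := by
      have a1 := le_max_left x (-y)
      have a2 := le_max_right x (-y)
      have a3 : max x (-y) < 1 := max_lt hx' (by linarith)
      generalize max x (-y) = m at *
      refine ⟨?_, ?_, ?_, ?_, ?_, ?_, ?_, ?_, ?_, ?_, ?_⟩ <;> nlinarith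
    have e3 : BallIneq x y ((1 - max x y) * (-(1 + x))) ((1 - max x y) * (-(1 + y)))
        (1 - max x y) (1 + max x y) := by
      have a1 := le_max_left x y
      have a2 := le_max_right x y
      have a3 : max x y < 1 := max_lt hx' hy'
      generalize max x y = m at *
      refine ⟨?_, ?_, ?_, ?_, ?_, ?_, ?_, ?_, ?_, ?_, ?_⟩ <;> nlinarith
    have e4 : BallIneq x y ((1 - max y (-x)) * (1 - x)) ((1 - max y (-x)) * (-(1 + y)))
        (1 - max y (-x)) (1 + max y (-x)) := by
      have a1 := le_max_left y (-x)
      have a2 := le_max_right y (-x)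
      have a3 : max y (-x) < 1 := max_lt hy' (by linarith)
      generalize max y (-x) = m at *
      refine ⟨?_, ?_, ?_, ?_, ?_, ?_, ?_, ?_, ?_, ?_, ?_⟩ <;> nlinarith
    intro z hz
    simp only [Set.mem_insert_iff, Set.mem_singleton_iff] at hz
    rcases hz with rfl | rfl | rfl | rfl | rfl | rfl | rfl | rfl <;>
      refine (mem_ball_iff_s4 _ _ _ _ hx hx' hy hy').2 ?_
    · exact ⟨_, _, e1⟩
    · exact ⟨_, _, e2⟩
    · exact ⟨_, _, e3⟩
    · exact ⟨_, _, e4⟩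
    · exact ⟨_, _, e1.neg⟩
    · exact ⟨_, _, e2.neg⟩
    · exact ⟨_, _, e3.neg⟩
    · exact ⟨_, _, e4.neg⟩
end

section
/- Let Z ⊂ ℝ² be a finite set with k elements whose convex hull P = convexHull(Z) has nonempty interior, and let p be an interior point of P. Then the Hilbert unit ball B_p = {ξ ∈ ℝ² : gauge(P − p)(ξ) + gauge(p − P)(ξ) ≤ 2} is a polygon with at most 2k vertices lying on the lines through the origin and the points z − p for z ∈ Z; that is, there exists a finite set V ⊂ ℝ² with at most 2k elements such that B_p = convexHull(V) and every v ∈ V is a real scalar multiple of z − p for some z ∈ Z. -/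
open Pointwise

theorem hb_gauge_sum_le (W : Finset (ℝ × ℝ)) (hK : Absorbent ℝ (convexHull ℝ (W : Set (ℝ × ℝ))))
    (c : ℝ × ℝ → ℝ) (hc : ∀ w ∈ W, 0 ≤ c w) :
    gauge (convexHull ℝ (W : Set (ℝ × ℝ))) (∑ w ∈ W, c w • w) ≤ ∑ w ∈ W, c w := by
  refine (gauge_sum_le (convex_convexHull ℝ _) hK W (fun w => c w • w)).trans ?_
  refine Finset.sum_le_sum fun w hw => ?_
  rw [gauge_smul_of_nonneg (hc w hw), smul_eq_mul]
  have : gauge (convexHull ℝ (W : Set (ℝ × ℝ))) w ≤ 1 :=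
    gauge_le_one_of_mem (subset_convexHull ℝ _ hw)
  nlinarith [hc w hw]

theorem hb_local (W : Finset (ℝ × ℝ)) (hK : convexHull ℝ (W : Set (ℝ × ℝ)) ∈ nhds 0)
    (v : ℝ × ℝ) (hv0 : v ≠ 0) (hv : ∀ w ∈ W, ∀ c : ℝ, v ≠ c • w) :
    ∃ α β : ℝ, ∀ u : ℝ × ℝ, ∃ ε > 0, ∀ t : ℝ, |t| ≤ ε →
      gauge (convexHull ℝ (W : Set (ℝ × ℝ))) (v + t • u) ≤
        gauge (convexHull ℝ (W : Set (ℝ × ℝ))) v + t * (α * u.1 + β * u.2) := by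
  set K := convexHull ℝ (W : Set (ℝ × ℝ)) with hKdef
  have habs : Absorbent ℝ K := absorbent_nhds_zero hK
  have hcpt : IsCompact K := W.finite_toSet.isCompact_convexHull ℝ
  have hr : 0 < gauge K v :=
    (gauge_pos habs ((NormedSpace.isVonNBounded_iff ℝ).2 hcpt.isBounded)).2 hv0
  set r := gauge K v with hrdef
  have hmem : r⁻¹ • v ∈ K := by
    have h1 : gauge K (r⁻¹ • v) ≤ 1 := by
      rw [gauge_smul_of_nonneg (inv_nonneg.2 hr.le), smul_eq_mul, ← hrdef,
        inv_mul_cancel₀ hr.ne']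
    have := (gauge_le_one_iff_mem_closure (convex_convexHull ℝ _) hK).1 h1
    rwa [hcpt.isClosed.closure_eq] at this
  obtain ⟨q, hq0, hq1, hqv⟩ := Finset.mem_convexHull'.1 hmem
  set s : ℝ × ℝ → ℝ := fun w => r * q w with hs
  have hs0 : ∀ w ∈ W, 0 ≤ s w := fun w hw => mul_nonneg hr.le (hq0 w hw)
  have hs1 : ∑ w ∈ W, s w = r := by simp only [hs]; rw [← Finset.mul_sum, hq1, mul_one]
  have hsv : ∑ w ∈ W, s w • w = v := by
    simp only [hs, mul_smul]
    rw [← Finset.smul_sum, hqv, smul_smul, mul_inv_cancel₀ hr.ne', one_smul]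
  obtain ⟨a, ha, hane⟩ : ∃ a ∈ W, s a • a ≠ 0 := by
    by_contra! h
    exact hv0 (by rw [← hsv]; exact Finset.sum_eq_zero h)
  have hsa : 0 < s a := lt_of_le_of_ne (hs0 a ha) (fun h => hane (by rw [← h, zero_smul]))
  have ha0 : a ≠ 0 := fun h => hane (by rw [h, smul_zero])
  obtain ⟨b, hb, hbne⟩ : ∃ b ∈ W, s b * (a.1 * b.2 - a.2 * b.1) ≠ 0 := by
    by_contra! h
    have h1 : a.1 * v.2 - a.2 * v.1 = 0 := by
      rw [← Finset.sum_eq_zero h, ← hsv, Prod.fst_sum, Prod.snd_sum, Finset.mul_sum,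
        Finset.mul_sum, ← Finset.sum_sub_distrib]
      refine Finset.sum_congr rfl fun w _ => ?_
      simp only [Prod.smul_fst, Prod.smul_snd, smul_eq_mul]
      ring
    by_cases h2 : a.1 = 0
    · have h3 : a.2 ≠ 0 := fun h3 => ha0 (Prod.ext h2 h3)
      refine hv a ha (v.2 / a.2) (Prod.ext ?_ ?_)
      · simp only [Prod.smul_fst, smul_eq_mul]
        rw [h2] at h1 ⊢
        have : a.2 * v.1 = 0 := by linarith
        simpa [h3] using this
      · simp [h3]
    · refine hv a ha (v.1 / a.1) (Prod.ext ?_ ?_)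
      · simp [h2]
      · simp only [Prod.smul_snd, smul_eq_mul]
        field_simp
        linarith
  have hsb : 0 < s b := lt_of_le_of_ne (hs0 b hb) (fun h => hbne (by rw [← h, zero_mul]))
  have hD : a.1 * b.2 - a.2 * b.1 ≠ 0 := fun h => hbne (by rw [h, mul_zero])
  set D := a.1 * b.2 - a.2 * b.1 with hDdef
  have hab : a ≠ b := by
    rintro rfl
    exact hD (by rw [hDdef]; ring)
  refine ⟨(b.2 - a.2) / D, (a.1 - b.1) / D, fun u => ?_⟩
  set x := (u.1 * b.2 - u.2 * b.1) / D with hx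
  set y := (a.1 * u.2 - a.2 * u.1) / D with hy
  have hu : u = x • a + y • b := by
    refine Prod.ext ?_ ?_
    · simp only [Prod.fst_add, Prod.smul_fst, smul_eq_mul, hx, hy]
      field_simp
      rw [hDdef]; ring
    · simp only [Prod.snd_add, Prod.smul_snd, smul_eq_mul, hx, hy]
      field_simp
      rw [hDdef]; ring
  have hL : (b.2 - a.2) / D * u.1 + (a.1 - b.1) / D * u.2 = x + y := by
    rw [hx, hy]; field_simp; ring
  refine ⟨min (s a / (|x| + 1)) (s b / (|y| + 1)), by positivity, fun t ht => ?_⟩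
  have htx : |t * x| ≤ s a := by
    have := ht.trans (min_le_left _ _)
    rw [le_div_iff₀ (by positivity)] at this
    rw [abs_mul]; nlinarith [abs_nonneg t]
  have hty : |t * y| ≤ s b := by
    have := ht.trans (min_le_right _ _)
    rw [le_div_iff₀ (by positivity)] at this
    rw [abs_mul]; nlinarith [abs_nonneg t]
  have key := hb_gauge_sum_le W habs
    (fun w => s w + (if w = a then t * x else 0) + (if w = b then t * y else 0)) (by
      intro w hw
      by_cases h1 : w = a
      · subst h1
        simp only [if_true, if_neg hab]
        linarith [neg_abs_le (t * x)]
      · by_cases h2 : w = b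
        · subst h2
          simp only [if_true, if_neg h1]
          linarith [neg_abs_le (t * y)]
        · simp only [if_neg h1, if_neg h2]
          linarith [hs0 w hw])
  simp only [add_smul, Finset.sum_add_distrib, ite_smul, zero_smul, Finset.sum_ite_eq', ha, hb,
    if_true, hs1, hsv] at key
  rw [hL]
  calc gauge K (v + t • u) = gauge K (v + (t * x) • a + (t * y) • b) := by
        rw [hu, smul_add, smul_smul, smul_smul, add_assoc]
    _ ≤ _ := key
    _ = _ := by ring

theorem hb_main (W : Finset (ℝ × ℝ)) (hK : convexHull ℝ (W : Set (ℝ × ℝ)) ∈ nhds 0) :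
    ∃ V : Finset (ℝ × ℝ), V.card ≤ 2 * W.card ∧
      {ξ : ℝ × ℝ | gauge (convexHull ℝ (W : Set (ℝ × ℝ))) ξ
        + gauge (convexHull ℝ (W : Set (ℝ × ℝ))) (-ξ) ≤ 2} = convexHull ℝ (V : Set (ℝ × ℝ)) ∧
      ∀ v ∈ V, ∃ w ∈ W, ∃ c : ℝ, v = c • w := by
  classical
  set K := convexHull ℝ (W : Set (ℝ × ℝ)) with hKdef
  have hKc : Convex ℝ K := convex_convexHull ℝ _
  have habs : Absorbent ℝ K := absorbent_nhds_zero hK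
  have hcpt : IsCompact K := W.finite_toSet.isCompact_convexHull ℝ
  set N : ℝ × ℝ → ℝ := fun ξ => gauge K ξ + gauge K (-ξ) with hN
  have hNneg : ∀ ξ, N (-ξ) = N ξ := fun ξ => by simp only [hN, neg_neg]; ring
  have hNnn : ∀ ξ, 0 ≤ N ξ := fun ξ => add_nonneg (gauge_nonneg _) (gauge_nonneg _)
  have hNs : ∀ c : ℝ, 0 ≤ c → ∀ ξ, N (c • ξ) = c * N ξ := fun c hc ξ => by
    simp only [hN]
    rw [← smul_neg, gauge_smul_of_nonneg hc, gauge_smul_of_nonneg hc, smul_eq_mul, smul_eq_mul]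
    ring
  have hNabs : ∀ c : ℝ, ∀ ξ, N (c • ξ) = |c| * N ξ := fun c ξ => by
    rcases le_total 0 c with h | h
    · rw [hNs c h, abs_of_nonneg h]
    · rw [← hNneg, ← neg_smul, hNs _ (neg_nonneg.2 h), abs_of_nonpos h]
  have hNadd : ∀ ξ η, N (ξ + η) ≤ N ξ + N η := fun ξ η => by
    simp only [hN]
    have h1 := gauge_add_le hKc habs ξ η
    have h2 := gauge_add_le hKc habs (-ξ) (-η)
    rw [neg_add]
    linarith
  have hNpos : ∀ ξ, ξ ≠ 0 → 0 < N ξ := fun ξ h => by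
    have := (gauge_pos habs ((NormedSpace.isVonNBounded_iff ℝ).2 hcpt.isBounded)).2 h
    exact add_pos_of_pos_of_nonneg this (gauge_nonneg _)
  have hWne : W.Nonempty := by
    rw [← Finset.coe_nonempty, ← convexHull_nonempty_iff (𝕜 := ℝ)]
    exact ⟨0, mem_of_mem_nhds hK⟩
  set B : Set (ℝ × ℝ) := {ξ | N ξ ≤ 2} with hB
  have hBc : Convex ℝ B := by
    intro ξ hξ η hη a b ha hb hab
    have h1 := hNadd (a • ξ) (b • η)
    rw [hNs a ha, hNs b hb] at h1
    simp only [hB, Set.mem_setOf_eq] at hξ hη ⊢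
    nlinarith
  have hg : Continuous (gauge K) := continuous_gauge hKc hK
  have hBclosed : IsClosed B :=
    isClosed_le (hg.add (hg.comp continuous_neg)) continuous_const
  have hBcpt : IsCompact B := by
    refine (hcpt.smul (2 : ℝ)).of_isClosed_subset hBclosed fun ξ hξ => ?_
    refine ⟨(2 : ℝ)⁻¹ • ξ, ?_, by simp⟩
    rw [← hcpt.isClosed.closure_eq, ← gauge_le_one_iff_mem_closure hKc hK,
      gauge_smul_of_nonneg (by norm_num), smul_eq_mul]
    have h1 : N ξ ≤ 2 := hξ
    have h2 : 0 ≤ gauge K (-ξ) := gauge_nonneg _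
    simp only [hN] at h1
    linarith
  set V : Finset (ℝ × ℝ) := W.image (fun w => (2 / N w) • w) ∪
    W.image (fun w => (-(2 / N w)) • w) with hV
  have hVe : ∀ v ∈ V, ∃ w ∈ W, |(2 / N w)| = 2 / N w ∧
      (v = (2 / N w) • w ∨ v = (-(2 / N w)) • w) := by
    intro v hv
    simp only [hV, Finset.mem_union, Finset.mem_image] at hv
    rcases hv with ⟨w, hw, rfl⟩ | ⟨w, hw, rfl⟩
    · exact ⟨w, hw, abs_of_nonneg (div_nonneg zero_le_two (hNnn w)), Or.inl rfl⟩
    · exact ⟨w, hw, abs_of_nonneg (div_nonneg zero_le_two (hNnn w)), Or.inr rfl⟩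
  refine ⟨V, ?_, ?_, ?_⟩
  · refine (Finset.card_union_le _ _).trans ?_
    have h1 := Finset.card_image_le (s := W) (f := fun w => (2 / N w) • w)
    have h2 := Finset.card_image_le (s := W) (f := fun w => (-(2 / N w)) • w)
    omega
  · apply Set.Subset.antisymm
    · change B ⊆ _
      rw [← closure_convexHull_extremePoints hBcpt hBc]
      have hVcl : IsClosed (convexHull ℝ (V : Set (ℝ × ℝ))) :=
        (V.finite_toSet.isCompact_convexHull ℝ).isClosed
      refine closure_minimal (convexHull_min ?_ (convex_convexHull ℝ _)) hVcl
      intro v hv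
      by_cases hp : ∃ w ∈ W, ∃ c : ℝ, v = c • w
      · obtain ⟨w, hw, c, rfl⟩ := hp
        have h1 : N (c • w) ≤ 2 := hv.1
        rw [hNabs] at h1
        have e1 : (2 / N w) • w ∈ convexHull ℝ (V : Set (ℝ × ℝ)) :=
          subset_convexHull ℝ _ (by
            simp only [hV, Finset.coe_union, Finset.coe_image]
            exact Or.inl ⟨w, hw, rfl⟩)
        have e2 : (-(2 / N w)) • w ∈ convexHull ℝ (V : Set (ℝ × ℝ)) :=
          subset_convexHull ℝ _ (by
            simp only [hV, Finset.coe_union, Finset.coe_image]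
            exact Or.inr ⟨w, hw, rfl⟩)
        by_cases hw0 : w = 0
        · subst hw0
          simpa using e1
        have hn := hNpos w hw0
        have hcle : |c| * N w / 2 ≤ 1 := by linarith
        have hcc : |c * N w / 2| ≤ 1 := by
          rw [abs_div, abs_mul, abs_of_pos hn, abs_two]; exact hcle
        obtain ⟨l1, l2⟩ := abs_le.1 hcc
        have := (convex_convexHull ℝ (V : Set (ℝ × ℝ))) e1 e2
          (a := (1 + c * N w / 2) / 2) (b := (1 - c * N w / 2) / 2)
          (by linarith) (by linarith) (by ring)
        convert this using 1
        rw [smul_smul, smul_smul, ← add_smul]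
        congr 1
        field_simp
        ring
      · exfalso
        push Not at hp
        have hv0 : v ≠ 0 := by
          obtain ⟨w, hw⟩ := hWne
          simpa using hp w hw 0
        obtain ⟨α, β, h1⟩ := hb_local W hK v hv0 hp
        obtain ⟨α', β', h2⟩ := hb_local W hK (-v) (neg_ne_zero.2 hv0) (by
          intro w hw c h
          exact hp w hw (-c) (by rw [neg_smul, ← h, neg_neg]))
        obtain ⟨u, hu0, hu⟩ : ∃ u : ℝ × ℝ, u ≠ 0 ∧
            (α * u.1 + β * u.2) = (α' * u.1 + β' * u.2) := by
          by_cases h : α = α' ∧ β = β'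
          · exact ⟨(1, 0), by simp, by rw [h.1, h.2]⟩
          · refine ⟨(β - β', α' - α), fun h' => h ?_, by simp only; ring⟩
            rw [Prod.mk_eq_zero] at h'
            constructor <;> linarith [h'.1, h'.2]
        obtain ⟨ε, hε, h1⟩ := h1 u
        obtain ⟨ε', hε', h2⟩ := h2 u
        have hδ : 0 < min ε ε' := lt_min hε hε'
        set δ := min ε ε' with hδdef
        have hmem : ∀ t : ℝ, |t| ≤ δ → v + t • u ∈ B := by
          intro t ht
          have k1 := h1 t (ht.trans (min_le_left _ _))
          have k2 := h2 (-t) (by rw [abs_neg]; exact ht.trans (min_le_right _ _))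
          have k3 : N v ≤ 2 := hv.1
          simp only [hB, hN, Set.mem_setOf_eq] at k3 ⊢
          have k4 : -(v + t • u) = -v + (-t) • u := by rw [neg_smul, neg_add]
          rw [k4]
          rw [hu] at k1
          linarith
        have m1 := hmem δ (by rw [abs_of_pos hδ])
        have m2 := hmem (-δ) (by rw [abs_neg, abs_of_pos hδ])
        have := hv.2 m1 m2 ⟨1/2, 1/2, by norm_num, by norm_num, by norm_num, by module⟩
        have h5 : δ • u = 0 := by simpa using this
        rcases smul_eq_zero.1 h5 with h | h
        · exact hδ.ne' h
        · exact hu0 h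
    · change _ ⊆ B
      refine convexHull_min ?_ hBc
      intro v hv
      obtain ⟨w, hw, h1, h2⟩ := hVe v hv
      have h3 : 2 / N w * N w ≤ 2 := by
        by_cases h : N w = 0
        · rw [h]; norm_num
        · rw [div_mul_cancel₀ _ h]
      change N v ≤ 2
      rcases h2 with rfl | rfl
      · rw [hNabs, h1]; exact h3
      · rw [hNabs, abs_neg, h1]; exact h3
  · intro v hv
    obtain ⟨w, hw, _, h⟩ := hVe v hv
    rcases h with h | h
    · exact ⟨w, hw, _, h⟩
    · exact ⟨w, hw, _, h⟩

theorem stmt6 (k : ℕ) (Z : Finset (ℝ × ℝ)) (hk : Z.card = k)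
    (p : ℝ × ℝ) (hp : p ∈ interior (convexHull ℝ (Z : Set (ℝ × ℝ)))) :
    ∃ V : Finset (ℝ × ℝ), V.card ≤ 2 * k ∧
      hilbertUnitBall (convexHull ℝ (Z : Set (ℝ × ℝ))) p = convexHull ℝ (V : Set (ℝ × ℝ)) ∧
      ∀ v ∈ V, ∃ z ∈ Z, ∃ c : ℝ, v = c • (z - p) := by
  classical
  have hW : convexHull ℝ ((Z.image (fun z => z - p) : Finset (ℝ × ℝ)) : Set (ℝ × ℝ)) =
      convexHull ℝ (Z : Set (ℝ × ℝ)) - {p} := by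
    rw [← convexHull_singleton (𝕜 := ℝ) p, ← convexHull_sub,
      Set.sub_singleton, Finset.coe_image]
  have hn : convexHull ℝ ((Z.image (fun z => z - p) : Finset (ℝ × ℝ)) : Set (ℝ × ℝ)) ∈
      nhds (0 : ℝ × ℝ) := by
    rw [hW, Set.sub_singleton]
    have h1 : convexHull ℝ (Z : Set (ℝ × ℝ)) ∈ nhds p := mem_interior_iff_mem_nhds.1 hp
    have h2 := (Homeomorph.subRight p).isOpenMap.image_mem_nhds h1
    simpa using h2
  obtain ⟨V, h1, h2, h3⟩ := hb_main _ hn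
  refine ⟨V, ?_, ?_, ?_⟩
  · have := Finset.card_image_le (s := Z) (f := fun z => z - p)
    omega
  · rw [← h2, hW]
    unfold hilbertUnitBall
    ext ξ
    rw [Set.mem_setOf_eq, Set.mem_setOf_eq, ← neg_sub (convexHull ℝ (Z : Set (ℝ × ℝ))) {p},
      gauge_neg_set_eq_gauge_neg]
  · intro v hv
    obtain ⟨w, hw, c, hc⟩ := h3 v hv
    obtain ⟨z, hz, rfl⟩ := Finset.mem_image.1 hw
    exact ⟨z, hz, c, hc⟩
end

section
/- For α ∈ [0,1) let Q_α ⊂ ℝ² be the interior of the convex hull of the four points (1,α), (α,1), (−1,−α), (−α,−1). Then ∫_{Q_α} A(x,y) d(x,y) tends to 3π²/8 as α tends to 1 from the left. -/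
open MeasureTheory Real

/-- The area of the dual unit ball of the Hilbert metric of the square `(-1,1)²`
at the point `(x,y)`. -/
noncomputable def dualBallArea (q : ℝ × ℝ) : ℝ :=
  (2 + max |q.1| |q.2|) / (2 * (1 - q.1 ^ 2) * (1 - q.2 ^ 2))

/-- The open quadrilateral with vertices `(1,α)`, `(α,1)`, `(-1,-α)`, `(-α,-1)`. -/
def hypQuad (α : ℝ) : Set (ℝ × ℝ) :=
  interior (convexHull ℝ
    ({((1 : ℝ), α), (α, (1 : ℝ)), ((-1 : ℝ), -α), (-α, (-1 : ℝ))} : Set (ℝ × ℝ)))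

open Filter Topology Set

lemma hasSum_odd_sq : HasSum (fun k : ℕ => (1 : ℝ) / (2 * k + 1) ^ 2) (π ^ 2 / 8) := by
  have h := hasSum_zeta_two
  have he : HasSum (fun k : ℕ => (1 : ℝ) / ((2 * k : ℕ) : ℝ) ^ 2) (π ^ 2 / 24) := by
    have := h.mul_left (1 / 4)
    rw [show π ^ 2 / 24 = 1 / 4 * (π ^ 2 / 6) by ring]
    refine this.congr_fun ?_
    intro k
    push_cast
    rw [mul_pow, div_mul_div_comm]
    norm_num
  have hs : Summable (fun k : ℕ => (1 : ℝ) / ((2 * k + 1 : ℕ) : ℝ) ^ 2) :=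
    h.summable.comp_injective (i := fun k : ℕ => 2 * k + 1) (fun a b hab => by
      simp only at hab; omega)
  have ho := hs.hasSum
  have := (HasSum.even_add_odd (f := fun n : ℕ => (1 : ℝ) / (n : ℝ) ^ 2) he ho).unique h
  have e : (∑' k : ℕ, (1 : ℝ) / ((2 * k + 1 : ℕ) : ℝ) ^ 2) = π ^ 2 / 8 := by linarith
  rw [e] at ho
  simpa using ho

/-- the limiting strip -/
def strip : Set (ℝ × ℝ) := Ioi 1 ×ˢ Ioo (-1) 1

lemma strip_meas : MeasurableSet strip := measurableSet_Ioi.prod measurableSet_Ioo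

lemma int_s (k : ℕ) : IntegrableOn (fun s : ℝ => 1 / s ^ (2 * k + 2)) (Ioi 1) ∧
    ∫ s in Ioi (1 : ℝ), 1 / s ^ (2 * k + 2) = 1 / (2 * k + 1) := by
  have hlt : (-(2 * k + 2 : ℕ) : ℝ) < -1 := by
    push_cast
    have : (0 : ℝ) ≤ k := Nat.cast_nonneg k
    linarith
  have hc : EqOn (fun s : ℝ => s ^ (-(2 * k + 2 : ℕ) : ℝ)) (fun s : ℝ => 1 / s ^ (2 * k + 2))
      (Ioi 1) := by
    intro s hs
    have : (0 : ℝ) ≤ s := le_trans zero_le_one (le_of_lt hs)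
    simp only
    rw [rpow_neg this, rpow_natCast, one_div]
  constructor
  · exact (integrableOn_Ioi_rpow_of_lt hlt zero_lt_one).congr_fun hc measurableSet_Ioi
  · rw [← setIntegral_congr_fun measurableSet_Ioi hc, integral_Ioi_rpow_of_lt hlt zero_lt_one]
    have : (2 * (k : ℝ) + 1) ≠ 0 := by positivity
    have h2 : (-(2 * k + 2 : ℕ) : ℝ) + 1 = -(2 * k + 1) := by push_cast; ring
    rw [h2, one_rpow]
    field_simp

lemma int_d (k : ℕ) : IntegrableOn (fun d : ℝ => d ^ (2 * k)) (Ioo (-1) 1) ∧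
    ∫ d in Ioo (-1 : ℝ) 1, d ^ (2 * k) = 2 / (2 * k + 1) := by
  constructor
  · exact ((continuous_pow (2 * k)).integrableOn_Icc (a := (-1 : ℝ)) (b := 1)).mono_set
      Ioo_subset_Icc_self
  · rw [← integral_Ioc_eq_integral_Ioo, ← intervalIntegral.integral_of_le (by norm_num),
      integral_pow]
    have : Odd (2 * k + 1) := ⟨k, rfl⟩
    rw [this.neg_one_pow]
    push_cast
    norm_num

lemma int_strip : ∫ p in strip, 1 / (p.1 ^ 2 - p.2 ^ 2) = π ^ 2 / 4 := by
  set μ : Measure (ℝ × ℝ) := volume.restrict strip with hμ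
  have hμ' : μ = (volume.restrict (Ioi (1 : ℝ))).prod (volume.restrict (Ioo (-1 : ℝ) 1)) := by
    rw [hμ, Measure.prod_restrict]; rfl
  let F : ℕ → ℝ × ℝ → ℝ := fun k p => (1 / p.1 ^ (2 * k + 2)) * p.2 ^ (2 * k)
  have hFi : ∀ k, Integrable (F k) μ := fun k => by
    rw [hμ']
    exact (int_s k).1.mul_prod (int_d k).1
  have hFv : ∀ k, ∫ p, F k p ∂μ = 2 * (1 / (2 * k + 1) ^ 2) := fun k => by
    rw [hμ']
    have := integral_prod_mul (μ := volume.restrict (Ioi (1 : ℝ)))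
      (ν := volume.restrict (Ioo (-1 : ℝ) 1)) (fun s : ℝ => 1 / s ^ (2 * k + 2))
      (fun d : ℝ => d ^ (2 * k))
    rw [(int_s k).2, (int_d k).2] at this
    rw [this, div_mul_div_comm]
    ring
  have hFn : ∀ k p, ‖F k p‖ = F k p := fun k p => by
    apply Real.norm_of_nonneg
    have : 0 ≤ p.1 ^ (2 * k + 2) := Even.pow_nonneg ⟨k + 1, by ring⟩ _
    have : 0 ≤ p.2 ^ (2 * k) := Even.pow_nonneg ⟨k, by ring⟩ _
    positivity
  have hsum := hasSum_odd_sq.mul_left 2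
  have h := hasSum_integral_of_summable_integral_norm hFi (by
    simp_rw [hFn, hFv]
    exact hsum.summable)
  simp_rw [hFv] at h
  have := h.unique hsum
  rw [show π ^ 2 / 4 = 2 * (π ^ 2 / 8) by ring, ← this]
  refine setIntegral_congr_fun strip_meas ?_
  rintro ⟨s, d⟩ ⟨hs, hd1, hd2⟩
  simp only [mem_Ioi] at hs hd1 hd2
  have hs0 : 0 < s := by linarith
  have hr : d ^ 2 / s ^ 2 < 1 := by
    rw [div_lt_one (by positivity)]
    nlinarith
  have hg := (hasSum_geometric_of_lt_one (by positivity) hr).mul_left (1 / s ^ 2)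
  have : HasSum (fun k => F k (s, d)) (1 / s ^ 2 * (1 - d ^ 2 / s ^ 2)⁻¹) := by
    refine hg.congr_fun ?_
    intro k
    simp only [F]
    rw [div_pow, ← pow_mul, ← pow_mul, pow_add]
    field_simp
  simp only
  rw [this.tsum_eq]
  have h1 : s ^ 2 - d ^ 2 ≠ 0 := by nlinarith
  have h2 : 1 - d ^ 2 / s ^ 2 ≠ 0 := by linarith
  have h3 : 1 - d ^ 2 / s ^ 2 = (s ^ 2 - d ^ 2) / s ^ 2 := by field_simp
  rw [h3]
  field_simp

lemma integrable_strip : IntegrableOn (fun p : ℝ × ℝ => 1 / (p.1 ^ 2 - p.2 ^ 2)) strip := by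
  by_contra h
  have := integral_undef h
  rw [int_strip] at this
  have h2 := pi_pos
  have h3 : 0 < π ^ 2 / 4 := by positivity
  linarith

/-- change of variables -/
noncomputable def T (c ε : ℝ) (p : ℝ × ℝ) : ℝ × ℝ :=
  (c * (1 - ε * (p.1 - p.2) / 2), c * (1 - ε * (p.1 + p.2) / 2))

noncomputable def linT (c ε : ℝ) : ℝ × ℝ →L[ℝ] ℝ × ℝ :=
  (Matrix.toLin (.finTwoProd ℝ) (.finTwoProd ℝ)
    !![-c * ε / 2, c * ε / 2; -c * ε / 2, -c * ε / 2]).toContinuousLinearMap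

lemma T_deriv (c ε : ℝ) (p : ℝ × ℝ) : HasFDerivAt (T c ε) (linT c ε) p := by
  have : T c ε = fun p => (linT c ε) p + (c, c) := by
    funext p
    simp only [T, linT]
    rw [Matrix.toLin_finTwoProd_toContinuousLinearMap]
    ext <;> simp <;> ring
  rw [this]
  exact (linT c ε).hasFDerivAt.add_const _

lemma linT_det (c ε : ℝ) (hc : c ^ 2 = 1) : |(linT c ε).det| = ε ^ 2 / 2 := by
  have : (linT c ε).det = ε ^ 2 / 2 := by
    simp only [linT, LinearMap.det_toContinuousLinearMap, LinearMap.det_toLin,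
      Matrix.det_fin_two_of]
    linear_combination (ε ^ 2 / 2) * hc
  rw [this]
  exact abs_of_nonneg (by positivity)

lemma T_inj (c ε : ℝ) (hc : c ^ 2 = 1) (hε : 0 < ε) : Function.Injective (T c ε) := by
  have hc0 : c ≠ 0 := by rintro rfl; norm_num at hc
  rintro ⟨a, b⟩ ⟨a', b'⟩ h
  simp only [T, Prod.mk.injEq, mul_eq_mul_left_iff, hc0, or_false] at h
  obtain ⟨h1, h2⟩ := h
  have e1 : ε * (a - a') = 0 := by linarith
  have e2 : ε * (b - b') = 0 := by linarith
  have := (mul_eq_zero.1 e1).resolve_left hε.ne'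
  have := (mul_eq_zero.1 e2).resolve_left hε.ne'
  ext <;> simp <;> linarith

noncomputable def G (ε : ℝ) (p : ℝ × ℝ) : ℝ :=
  (2 + max |1 - ε * (p.1 - p.2) / 2| |1 - ε * (p.1 + p.2) / 2|) /
    ((p.1 ^ 2 - p.2 ^ 2) * (2 - ε * (p.1 - p.2) / 2) * (2 - ε * (p.1 + p.2) / 2))

lemma dual_T (c ε : ℝ) (hc : c ^ 2 = 1) (hε : 0 < ε) (p : ℝ × ℝ) :
    (ε ^ 2 / 2) • dualBallArea (T c ε p) = G ε p := by
  have hc1 : |c| = 1 := by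
    rw [← sq_eq_sq₀ (abs_nonneg _) zero_le_one, sq_abs, hc]; norm_num
  obtain ⟨s, d⟩ := p
  simp only [dualBallArea, T, G, abs_mul, hc1, one_mul, mul_pow, hc, smul_eq_mul]
  have e : 2 * (1 - (1 - ε * (s - d) / 2) ^ 2) * (1 - (1 - ε * (s + d) / 2) ^ 2)
      = (ε ^ 2 / 2) * ((s ^ 2 - d ^ 2) * (2 - ε * (s - d) / 2) * (2 - ε * (s + d) / 2)) := by ring
  rw [e, ← mul_div_assoc, mul_div_mul_left _ _ (by positivity)]

lemma G_meas (ε : ℝ) : Measurable (G ε) := by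
  unfold G
  fun_prop

lemma G_bound (ε : ℝ) (hε : 0 < ε) (hε1 : ε ≤ 1) (p : ℝ × ℝ) (hp : p ∈ strip)
    (hp2 : p.1 ≤ 2 / ε) : ‖G ε p‖ ≤ 12 * (1 / (p.1 ^ 2 - p.2 ^ 2)) := by
  obtain ⟨s, d⟩ := p
  obtain ⟨hs, hd1, hd2⟩ := hp
  simp only [mem_Ioi] at hs hd1 hd2 hp2
  rw [le_div_iff₀ hε] at hp2
  have h0 : 0 < s ^ 2 - d ^ 2 := by nlinarith
  have a1 : ε * d ≤ 1 := by nlinarith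
  have a2 : -1 ≤ ε * d := by nlinarith
  have b1 : 0 < ε * (s - d) := mul_pos hε (by linarith)
  have b2 : 0 < ε * (s + d) := mul_pos hε (by linarith)
  have c1 : ε * (s - d) ≤ 3 := by nlinarith
  have c2 : ε * (s + d) ≤ 3 := by nlinarith
  have m1 : |1 - ε * (s - d) / 2| ≤ 1 := abs_le.2 ⟨by linarith, by linarith⟩
  have m2 : |1 - ε * (s + d) / 2| ≤ 1 := abs_le.2 ⟨by linarith, by linarith⟩
  have m3 : 0 ≤ max |1 - ε * (s - d) / 2| |1 - ε * (s + d) / 2| :=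
    le_max_of_le_left (abs_nonneg _)
  have m4 := max_le m1 m2
  have e : G ε (s, d) = (2 + max |1 - ε * (s - d) / 2| |1 - ε * (s + d) / 2|) /
    ((s ^ 2 - d ^ 2) * ((2 - ε * (s - d) / 2) * (2 - ε * (s + d) / 2))) := by
    simp only [G, mul_assoc]
  have k : 1 / 4 ≤ (2 - ε * (s - d) / 2) * (2 - ε * (s + d) / 2) := by nlinarith
  rw [e, Real.norm_of_nonneg (by positivity)]
  simp only
  rw [mul_one_div, div_le_div_iff₀ (by positivity) h0]
  nlinarith [mul_le_mul_of_nonneg_left k h0.le]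

lemma G_tendsto (p : ℝ × ℝ) (hp : p ∈ strip) :
    Tendsto (fun ε => G ε p) (𝓝 0) (𝓝 (3 / 4 * (1 / (p.1 ^ 2 - p.2 ^ 2)))) := by
  obtain ⟨s, d⟩ := p
  obtain ⟨hs, hd1, hd2⟩ := hp
  simp only [mem_Ioi] at hs hd1 hd2
  have h0 : 0 < s ^ 2 - d ^ 2 := by nlinarith
  have hG : ContinuousAt (fun ε => G ε (s, d)) 0 := by
    unfold G
    apply ContinuousAt.div
    · fun_prop
    · fun_prop
    · simp; linarith
  have e : G 0 (s, d) = 3 / 4 * (1 / (s ^ 2 - d ^ 2)) := by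
    simp [G]
    field_simp
    norm_num
  have := hG.tendsto
  rwa [e] at this

lemma E_sub (E : ℝ → Set ℝ) (hE2 : ∀ ε, E ε ⊆ Ioc 1 (2 / ε))
    (ε : ℝ) : E ε ×ˢ Ioo (-1) 1 ⊆ strip :=
  prod_mono (fun _ hx => (hE2 ε hx).1) subset_rfl

lemma G_intble (E : ℝ → Set ℝ) (hE2 : ∀ ε, E ε ⊆ Ioc 1 (2 / ε))
    (hEm : ∀ ε, MeasurableSet (E ε)) (ε : ℝ) (hε : 0 < ε) (hε1 : ε ≤ 1) :
    IntegrableOn (G ε) (E ε ×ˢ Ioo (-1) 1) := by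
  refine Integrable.mono' ((integrable_strip.mono_set (E_sub E hE2 ε)).const_mul 12)
    (G_meas ε).aestronglyMeasurable ?_
  filter_upwards [ae_restrict_mem ((hEm ε).prod measurableSet_Ioo)] with p hp
  exact G_bound ε hε hε1 p (E_sub E hE2 ε hp) (hE2 ε hp.1).2

lemma G_lim (E : ℝ → Set ℝ) (hE1 : ∀ ε, Ioo 1 (2 / ε) ⊆ E ε)
    (hE2 : ∀ ε, E ε ⊆ Ioc 1 (2 / ε)) (hEm : ∀ ε, MeasurableSet (E ε)) : Tendsto (fun ε => ∫ p in E ε ×ˢ Ioo (-1) 1, G ε p) (𝓝[>] 0)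
    (𝓝 (3 * π ^ 2 / 16)) := by
  have hm : ∀ ε, MeasurableSet (E ε ×ˢ Ioo (-1 : ℝ) 1) := fun ε => (hEm ε).prod measurableSet_Ioo
  have key : Tendsto (fun ε => ∫ p in strip, (E ε ×ˢ Ioo (-1) 1).indicator (G ε) p) (𝓝[>] 0)
      (𝓝 (∫ p in strip, 3 / 4 * (1 / (p.1 ^ 2 - p.2 ^ 2)))) := by
    refine tendsto_integral_filter_of_dominated_convergence
      (fun p => 12 * (1 / (p.1 ^ 2 - p.2 ^ 2))) ?_ ?_ (integrable_strip.const_mul 12) ?_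
    · exact Eventually.of_forall fun ε => ((G_meas ε).indicator (hm ε)).aestronglyMeasurable
    · filter_upwards [Ioc_mem_nhdsGT (zero_lt_one (α := ℝ))] with ε hε
      filter_upwards [ae_restrict_mem strip_meas] with p hp
      by_cases h : p ∈ E ε ×ˢ Ioo (-1 : ℝ) 1
      · rw [indicator_of_mem h]
        exact G_bound ε hε.1 hε.2 p hp (hE2 ε h.1).2
      · rw [indicator_of_notMem h, norm_zero]
        obtain ⟨hs, hd1, hd2⟩ := hp
        simp only [mem_Ioi] at hs hd1 hd2
        have h0 : 0 < p.1 ^ 2 - p.2 ^ 2 := by nlinarith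
        positivity
    · filter_upwards [ae_restrict_mem strip_meas] with p hp
      refine ((G_tendsto p hp).mono_left nhdsWithin_le_nhds).congr' ?_
      have hs : 1 < p.1 := hp.1
      filter_upwards [Ioo_mem_nhdsGT (show (0 : ℝ) < 2 / p.1 by positivity)] with ε hε
      rw [indicator_of_mem]
      refine ⟨hE1 ε ⟨hs, ?_⟩, hp.2⟩
      have h2 := hε.2
      have h1 := hε.1
      rw [lt_div_iff₀ (by positivity)] at h2 ⊢
      linarith
  rw [integral_const_mul, int_strip] at key
  convert key using 2
  · rw [setIntegral_indicator (hm _), inter_eq_right.2 (E_sub E hE2 _)]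
  · ring

lemma T_image (c ε : ℝ) (hc : c ^ 2 = 1) (hε : 0 < ε) (I : Set ℝ) :
    T c ε '' (I ×ˢ Ioo (-1) 1) =
      {q | |q.1 - q.2| < ε ∧ (2 - c * (q.1 + q.2)) / ε ∈ I} := by
  have hcc : c = 1 ∨ c = -1 := by simpa using hc
  ext ⟨x, y⟩
  constructor
  · rintro ⟨⟨s, d⟩, ⟨hs, hd1, hd2⟩, h⟩
    simp only [T, Prod.mk.injEq] at h
    obtain ⟨rfl, rfl⟩ := h
    simp only at hs hd1 hd2
    constructor
    · simp only
      rw [abs_lt]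
      rcases hcc with rfl | rfl <;> constructor <;> nlinarith
    · simp only
      convert hs using 1
      rcases hcc with rfl | rfl <;> field_simp <;> ring
  · rintro ⟨h1, h2⟩
    simp only at h1 h2
    rw [abs_lt] at h1
    refine ⟨((2 - c * (x + y)) / ε, c * (x - y) / ε), ⟨h2, ?_, ?_⟩, ?_⟩
    · simp only
      rw [lt_div_iff₀ hε]
      rcases hcc with rfl | rfl <;> linarith
    · simp only
      rw [div_lt_iff₀ hε]
      rcases hcc with rfl | rfl <;> linarith
    · simp only [T]
      ext
      · simp only
        rcases hcc with rfl | rfl <;> field_simp <;> ring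
      · simp only
        rcases hcc with rfl | rfl <;> field_simp <;> ring

noncomputable def Lmap : (ℝ × ℝ) ≃L[ℝ] (ℝ × ℝ) :=
  LinearEquiv.toContinuousLinearEquiv
  { toFun := fun q => (q.1 + q.2, q.1 - q.2)
    invFun := fun q => ((q.1 + q.2) / 2, (q.1 - q.2) / 2)
    map_add' := by intro x y; ext <;> simp <;> ring
    map_smul' := by intro x y; ext <;> simp <;> ring
    left_inv := by intro x; ext <;> simp
    right_inv := by intro x; ext <;> simp <;> ring }

lemma Lmap_apply (q : ℝ × ℝ) : Lmap q = (q.1 + q.2, q.1 - q.2) := rfl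
lemma Lmap_symm_apply (q : ℝ × ℝ) : Lmap.symm q = ((q.1 + q.2) / 2, (q.1 - q.2) / 2) := rfl

lemma hypQuad_eq (α : ℝ) (h0 : 0 ≤ α) (h1 : α < 1) :
    hypQuad α = {q | |q.1 - q.2| < 1 - α ∧ |q.1 + q.2| < 1 + α} := by
  have e1 : ({((1 : ℝ), α), (α, (1 : ℝ)), ((-1 : ℝ), -α), (-α, (-1 : ℝ))} : Set (ℝ × ℝ)) =
      Lmap.symm.toLinearEquiv.toLinearMap ''
        (({-(1 + α), 1 + α} : Set ℝ) ×ˢ ({-(1 - α), 1 - α} : Set ℝ)) := by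
    rw [insert_prod, singleton_prod, image_pair, image_pair, image_union, image_pair, image_pair]
    have f : ∀ q, Lmap.symm.toLinearEquiv.toLinearMap q = ((q.1 + q.2) / 2, (q.1 - q.2) / 2) :=
      fun q => rfl
    simp only [f]
    ring_nf
    ext q
    simp only [mem_insert_iff, mem_singleton_iff, mem_union]
    tauto
  rw [hypQuad, e1, ← LinearMap.image_convexHull, convexHull_prod, convexHull_pair, convexHull_pair,
    segment_eq_Icc (by linarith), segment_eq_Icc (by linarith)]
  have e2 : ∀ S : Set (ℝ × ℝ), Lmap.symm.toLinearEquiv.toLinearMap '' S = Lmap ⁻¹' S := fun S =>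
    Lmap.symm.image_eq_preimage_symm S
  rw [e2, ← IsOpenMap.preimage_interior_eq_interior_preimage (f := Lmap)
    Lmap.toHomeomorph.isOpenMap Lmap.continuous,
    interior_prod_eq, interior_Icc, interior_Icc]
  ext q
  simp only [mem_preimage, Lmap_apply, mem_prod, mem_Ioo, mem_ofPred_eq, abs_lt]
  tauto

lemma cov (c ε : ℝ) (hc : c ^ 2 = 1) (hε : 0 < ε) (I : Set ℝ) (hI : MeasurableSet I) :
    ∫ q in T c ε '' (I ×ˢ Ioo (-1) 1), dualBallArea q = ∫ p in I ×ˢ Ioo (-1) 1, G ε p := by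
  rw [integral_image_eq_integral_abs_det_fderiv_smul volume (hI.prod measurableSet_Ioo)
    (fun x _ => (T_deriv c ε x).hasFDerivWithinAt) (T_inj c ε hc hε).injOn]
  simp_rw [linT_det c ε hc, dual_T c ε hc hε]

lemma cov_int (c ε : ℝ) (hc : c ^ 2 = 1) (hε : 0 < ε) (I : Set ℝ) (hI : MeasurableSet I)
    (h : IntegrableOn (G ε) (I ×ˢ Ioo (-1) 1)) :
    IntegrableOn dualBallArea (T c ε '' (I ×ˢ Ioo (-1) 1)) := by
  rw [integrableOn_image_iff_integrableOn_abs_det_fderiv_smul volume (hI.prod measurableSet_Ioo)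
    (fun x _ => (T_deriv c ε x).hasFDerivWithinAt) (T_inj c ε hc hε).injOn]
  simp_rw [linT_det c ε hc, dual_T c ε hc hε]
  exact h

theorem stmt9 :
    Filter.Tendsto (fun α : ℝ => ∫ q in hypQuad α, dualBallArea q)
      (nhdsWithin 1 (Set.Ico (0 : ℝ) 1)) (nhds (3 * π ^ 2 / 8)) := by
  have hA := G_lim (fun ε => Ioc 1 (2 / ε)) (fun _ => Ioo_subset_Ioc_self) (fun _ => subset_rfl)
    (fun _ => measurableSet_Ioc)
  have hB := G_lim (fun ε => Ioo 1 (2 / ε)) (fun _ => subset_rfl) (fun _ => Ioo_subset_Ioc_self)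
    (fun _ => measurableSet_Ioo)
  have hAB := hA.add hB
  have ht : Tendsto (fun α : ℝ => 1 - α) (nhdsWithin 1 (Set.Ico (0 : ℝ) 1)) (𝓝[>] 0) := by
    refine tendsto_nhdsWithin_iff.2 ⟨?_, ?_⟩
    · have : Continuous (fun α : ℝ => 1 - α) := by fun_prop
      have := this.tendsto 1
      simp only [sub_self] at this
      exact this.mono_left nhdsWithin_le_nhds
    · filter_upwards [self_mem_nhdsWithin] with α hα
      simp only [mem_Ioi]
      linarith [hα.2]
  have := hAB.comp ht
  rw [show 3 * π ^ 2 / 8 = 3 * π ^ 2 / 16 + 3 * π ^ 2 / 16 by ring]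
  refine this.congr' ?_
  filter_upwards [self_mem_nhdsWithin] with α hα
  obtain ⟨h0, h1⟩ := hα
  have hε : 0 < 1 - α := by linarith
  have hε1 : 1 - α ≤ 1 := by linarith
  have c1 : (1 : ℝ) ^ 2 = 1 := by norm_num
  have c2 : (-1 : ℝ) ^ 2 = 1 := by norm_num
  have iA := cov_int 1 (1 - α) c1 hε _ measurableSet_Ioc (G_intble (fun ε => Ioc 1 (2 / ε))
    (fun _ => subset_rfl) (fun _ => measurableSet_Ioc) (1 - α) hε hε1)
  have iB := cov_int (-1) (1 - α) c2 hε _ measurableSet_Ioo (G_intble (fun ε => Ioo 1 (2 / ε))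
    (fun _ => Ioo_subset_Ioc_self) (fun _ => measurableSet_Ioo) (1 - α) hε hε1)
  simp only [Function.comp_apply]
  rw [← cov 1 (1 - α) c1 hε _ measurableSet_Ioc, ← cov (-1) (1 - α) c2 hε _ measurableSet_Ioo]
  rw [T_image _ _ c1 hε] at iA ⊢
  rw [T_image _ _ c2 hε] at iB ⊢
  have simpA : {q : ℝ × ℝ | |q.1 - q.2| < 1 - α ∧
      (2 - 1 * (q.1 + q.2)) / (1 - α) ∈ Ioc 1 (2 / (1 - α))} =
      {q : ℝ × ℝ | |q.1 - q.2| < 1 - α ∧ 0 ≤ q.1 + q.2 ∧ q.1 + q.2 < 1 + α} := by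
    ext q
    simp only [mem_ofPred_eq, mem_Ioc, lt_div_iff₀ hε, div_le_div_iff_of_pos_right hε]
    constructor <;> rintro ⟨a, b, c⟩ <;> exact ⟨a, by linarith, by linarith⟩
  have simpB : {q : ℝ × ℝ | |q.1 - q.2| < 1 - α ∧
      (2 - -1 * (q.1 + q.2)) / (1 - α) ∈ Ioo 1 (2 / (1 - α))} =
      {q : ℝ × ℝ | |q.1 - q.2| < 1 - α ∧ q.1 + q.2 < 0 ∧ -(1 + α) < q.1 + q.2} := by
    ext q
    simp only [mem_ofPred_eq, mem_Ioo, one_lt_div hε, div_lt_div_iff_of_pos_right hε]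
    constructor <;> rintro ⟨a, b, c⟩ <;> exact ⟨a, by linarith, by linarith⟩
  rw [simpA] at iA ⊢
  rw [simpB] at iB ⊢
  rw [← setIntegral_union _ _ iA iB]
  · congr 2
    rw [hypQuad_eq α h0 h1]
    ext q
    simp only [mem_union, mem_ofPred_eq, abs_lt (a := q.1 + q.2)]
    constructor
    · rintro (⟨a, b, c⟩ | ⟨a, b, c⟩)
      · exact ⟨a, by linarith, by linarith⟩
      · exact ⟨a, by linarith, by linarith⟩
    · rintro ⟨a, b, c⟩
      rcases le_or_gt 0 (q.1 + q.2) with h | h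
      · exact Or.inl ⟨a, h, c⟩
      · exact Or.inr ⟨a, h, b⟩
  · rw [Set.disjoint_left]
    rintro q ⟨_, h, _⟩ ⟨_, h', _⟩
    linarith
  · rw [← simpB, ← T_image _ _ c2 hε]
    exact measurable_image_of_fderivWithin (measurableSet_Ioo.prod measurableSet_Ioo)
      (fun x _ => (T_deriv (-1) (1 - α) x).hasFDerivWithinAt) (T_inj (-1) (1 - α) c2 hε).injOn
end

section
/- For α ∈ (0,1) let T_α = {(x,y) ∈ ℝ² : |x| < y < α} be the open triangle cut out by the lines y = x, y = −x and y = α. Then (∫_{T_α} A(x,y) d(x,y)) / (log(1−α))² tends to 3/8 as α tends to 1 from the left. Likewise, for β ∈ (0,1), with T'_β = {(x,y) ∈ ℝ² : |y| < x < β}, the ratio (∫_{T'_β} A(x,y) d(x,y)) / (log(1−β))² tends to 3/8 as β tends to 1 from the left. -/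
open MeasureTheory Real

lemma aux_inner (x : ℝ) (h0 : 0 < x) (h1 : x < 1) :
    ∫ y in Set.Ioo (-x) x, dualBallArea (x, y) =
      (3 / 4 / (1 - x) + 1 / 4 / (1 + x)) * (log (1 + x) - log (1 - x)) := by
  have e1 : ∫ y in Set.Ioo (-x) x, dualBallArea (x, y) =
      ∫ y in Set.Ioo (-x) x, (2 + x) / (2 * (1 - x ^ 2)) * (1 / (1 - y ^ 2)) := by
    apply setIntegral_congr_fun measurableSet_Ioo
    intro y hy
    have hm : max |x| |y| = x := by
      rw [abs_of_pos h0]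
      exact max_eq_left (abs_le.2 ⟨hy.1.le, hy.2.le⟩)
    have ha : 1 - x ^ 2 ≠ 0 := by nlinarith
    have hb : 1 - y ^ 2 ≠ 0 := by nlinarith [hy.1, hy.2]
    simp only [dualBallArea, hm]
    field_simp
  rw [e1, ← integral_Ioc_eq_integral_Ioo,
    ← intervalIntegral.integral_of_le (by linarith), intervalIntegral.integral_const_mul]
  have e2 : ∫ y in (-x)..x, (1 / (1 - y ^ 2)) = log (1 + x) - log (1 - x) := by
    have hd : ∀ y ∈ Set.uIcc (-x) x,
        HasDerivAt (fun y => (log (1 + y) - log (1 - y)) / 2) (1 / (1 - y ^ 2)) y := by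
      intro y hy
      rw [Set.uIcc_of_le (by linarith)] at hy
      have ha : 1 + y ≠ 0 := by linarith [hy.1]
      have hb : 1 - y ≠ 0 := by linarith [hy.2]
      have hc : 1 - y ^ 2 ≠ 0 := by
        have : 1 - y ^ 2 = (1 + y) * (1 - y) := by ring
        rw [this]; exact mul_ne_zero ha hb
      have := (((((hasDerivAt_id y).const_add 1).log ha)).sub
        (((hasDerivAt_id y).const_sub 1).log hb)).div_const 2
      refine this.congr_deriv ?_
      simp only [id]
      have : 1 - y ^ 2 = (1 + y) * (1 - y) := by ring
      rw [this]
      field_simp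
      ring
    rw [intervalIntegral.integral_eq_sub_of_hasDerivAt hd]
    · simp only [sub_neg_eq_add, ← sub_eq_add_neg]; ring
    · apply ContinuousOn.intervalIntegrable
      apply ContinuousOn.div (by fun_prop) (by fun_prop)
      intro y hy
      rw [Set.uIcc_of_le (by linarith)] at hy
      nlinarith [hy.1, hy.2]
  rw [e2]
  congr 1
  have ha : 1 + x ≠ 0 := by linarith
  have hb : 1 - x ≠ 0 := by linarith
  have : 1 - x ^ 2 = (1 + x) * (1 - x) := by ring
  rw [this]
  field_simp
  ring

lemma aux_meas (β : ℝ) : MeasurableSet {q : ℝ × ℝ | |q.2| < q.1 ∧ q.1 < β} := by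
  have h1 : MeasurableSet {q : ℝ × ℝ | |q.2| < q.1} :=
    measurableSet_lt (by fun_prop) (by fun_prop)
  have h2 : MeasurableSet {q : ℝ × ℝ | q.1 < β} :=
    measurableSet_lt (by fun_prop) (by fun_prop)
  exact h1.inter h2

lemma aux_int (β : ℝ) (h0 : 0 < β) (h1 : β < 1) :
    IntegrableOn dualBallArea {q : ℝ × ℝ | |q.2| < q.1 ∧ q.1 < β} := by
  have hc : IntegrableOn dualBallArea (Set.Icc (-β) β ×ˢ Set.Icc (-β) β) := by
    apply ContinuousOn.integrableOn_compact (isCompact_Icc.prod isCompact_Icc)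
    unfold dualBallArea
    apply ContinuousOn.div (by fun_prop) (by fun_prop)
    rintro ⟨x, y⟩ ⟨hx, hy⟩
    simp only [Set.mem_Icc] at hx hy
    have ha : 1 - x ^ 2 ≠ 0 := by nlinarith
    have hb : 1 - y ^ 2 ≠ 0 := by nlinarith
    positivity
  apply hc.mono_set
  rintro ⟨x, y⟩ ⟨h, h'⟩
  simp only at h h'
  have := abs_lt.1 h
  have := abs_nonneg y
  refine ⟨⟨?_, ?_⟩, ?_, ?_⟩ <;> simp only <;> linarith

lemma aux_fubini (β : ℝ) (h0 : 0 < β) (h1 : β < 1) :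
    ∫ q in {q : ℝ × ℝ | |q.2| < q.1 ∧ q.1 < β}, dualBallArea q =
      ∫ x in (0:ℝ)..β, (3 / 4 / (1 - x) + 1 / 4 / (1 + x)) * (log (1 + x) - log (1 - x)) := by
  rw [← integral_indicator (aux_meas β), Measure.volume_eq_prod, integral_prod]
  · rw [intervalIntegral.integral_of_le h0.le, integral_Ioc_eq_integral_Ioo,
      ← integral_indicator measurableSet_Ioo]
    congr 1
    ext x
    by_cases hx : x ∈ Set.Ioo 0 β
    · rw [Set.indicator_of_mem hx, ← aux_inner x hx.1 (hx.2.trans h1),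
        ← integral_indicator measurableSet_Ioo]
      congr 1
      ext y
      simp only [Set.indicator, Set.mem_ofPred_eq, Set.mem_Ioo, abs_lt, hx.2, and_true]
    · rw [Set.indicator_of_notMem hx]
      rw [← integral_zero ℝ ℝ (μ := volume)]
      congr 1
      ext y
      apply Set.indicator_of_notMem
      rintro ⟨h, h'⟩
      exact hx ⟨(abs_nonneg y).trans_lt h, h'⟩
  · rw [← Measure.volume_eq_prod]
    exact (integrable_indicator_iff (aux_meas β)).2 (aux_int β h0 h1)

lemma aux_eval (β : ℝ) (h0 : 0 < β) (h1 : β < 1) :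
    ∫ x in (0:ℝ)..β, (3 / 4 / (1 - x) + 1 / 4 / (1 + x)) * (log (1 + x) - log (1 - x)) =
      3 / 8 * log (1 - β) ^ 2 + 1 / 8 * log (1 + β) ^ 2 - 3 / 4 * (log (1 - β) * log (1 + β))
       + ∫ x in (0:ℝ)..β, 1 / 2 * log (1 - x) / (1 + x) := by
  have hne : ∀ x ∈ Set.uIcc 0 β, 1 + x ≠ 0 ∧ 1 - x ≠ 0 := by
    intro x hx
    rw [Set.uIcc_of_le h0.le] at hx
    constructor <;> linarith [hx.1, hx.2]
  have hA : ∀ x ∈ Set.uIcc 0 β, 1 + x ≠ 0 := fun x hx => (hne x hx).1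
  have hB : ∀ x ∈ Set.uIcc 0 β, 1 - x ≠ 0 := fun x hx => (hne x hx).2
  have i1 : IntervalIntegrable (fun x => (3 / 4 / (1 - x) + 1 / 4 / (1 + x)) *
      (log (1 + x) - log (1 - x))) volume 0 β := by
    apply ContinuousOn.intervalIntegrable
    fun_prop (disch := assumption)
  have i2 : IntervalIntegrable (fun x => 1 / 2 * log (1 - x) / (1 + x)) volume 0 β := by
    apply ContinuousOn.intervalIntegrable
    fun_prop (disch := assumption)
  rw [← sub_eq_iff_eq_add, ← intervalIntegral.integral_sub i1 i2]
  rw [intervalIntegral.integral_eq_sub_of_hasDerivAt (f := fun x => 3 / 8 * log (1 - x) ^ 2 +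
    1 / 8 * log (1 + x) ^ 2 - 3 / 4 * (log (1 - x) * log (1 + x))) _ (i1.sub i2)]
  · simp
  · intro x hx
    obtain ⟨ha, hb⟩ := hne x hx
    have hu := ((hasDerivAt_id x).const_sub 1).log hb
    have hv := ((hasDerivAt_id x).const_add 1).log ha
    have := (((hu.pow 2).const_mul (3/8)).add ((hv.pow 2).const_mul (1/8))).sub
      ((hu.mul hv).const_mul (3/4))
    refine this.congr_deriv ?_
    simp only [id]
    field_simp
    push_cast
    ring

lemma aux_rem (β : ℝ) (h0 : 0 < β) (h1 : β < 1) :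
    |∫ x in (0:ℝ)..β, 1 / 2 * log (1 - x) / (1 + x)| ≤ |log (1 - β)| := by
  have := intervalIntegral.norm_integral_le_of_norm_le_const (a := 0) (b := β)
    (f := fun x => 1 / 2 * log (1 - x) / (1 + x)) (C := |log (1 - β)|) (by
      intro x hx
      rw [Set.uIoc_of_le h0.le] at hx
      have hx0 := hx.1
      have l1 : log (1 - β) ≤ log (1 - x) := log_le_log (by linarith) (by linarith [hx.2])
      have l2 : log (1 - x) ≤ 0 := log_nonpos (by linarith [hx.2]) (by linarith)
      rw [norm_eq_abs, abs_div, abs_mul, abs_of_nonpos l2, abs_of_nonpos (l1.trans l2),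
        abs_of_pos (by norm_num : (0:ℝ) < 1/2), abs_of_pos (by linarith : 0 < 1 + x),
        div_le_iff₀ (by linarith)]
      nlinarith)
  rw [norm_eq_abs, sub_zero, abs_of_pos h0] at this
  exact this.trans (mul_le_of_le_one_right (abs_nonneg _) h1.le)

lemma aux_tendsto : Filter.Tendsto
      (fun β : ℝ =>
        (∫ q in {q : ℝ × ℝ | |q.2| < q.1 ∧ q.1 < β}, dualBallArea q) /
          (Real.log (1 - β)) ^ 2)
      (nhdsWithin 1 (Set.Ioo (0 : ℝ) 1)) (nhds (3 / 8)) := by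
  set l := nhdsWithin (1:ℝ) (Set.Ioo (0 : ℝ) 1)
  have hmem : ∀ᶠ β in l, β ∈ Set.Ioo (0:ℝ) 1 := self_mem_nhdsWithin
  have hu : Filter.Tendsto (fun β : ℝ => log (1 - β)) l Filter.atBot := by
    apply tendsto_log_nhdsGT_zero.comp
    apply tendsto_nhdsWithin_of_tendsto_nhds_of_eventually_within
    · have : Filter.Tendsto (fun β : ℝ => 1 - β) (nhds 1) (nhds (1 - 1)) :=
        (by fun_prop : Continuous fun β : ℝ => 1 - β).tendsto 1
      rw [sub_self] at this
      exact this.mono_left nhdsWithin_le_nhds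
    · filter_upwards [hmem] with β hβ
      simpa using hβ.2
  have hi : Filter.Tendsto (fun β : ℝ => (log (1 - β))⁻¹) l (nhds 0) :=
    tendsto_inv_atBot_zero.comp hu
  have hv : Filter.Tendsto (fun β : ℝ => log (1 + β)) l (nhds (log (1 + 1))) := by
    apply Filter.Tendsto.mono_left _ nhdsWithin_le_nhds
    apply ContinuousAt.tendsto (f := fun β : ℝ => log (1 + β))
    fun_prop (disch := norm_num)
  have hw := hv.mul hi
  rw [mul_zero] at hw
  have hr : Filter.Tendsto (fun β : ℝ => (∫ x in (0:ℝ)..β, 1 / 2 * log (1 - x) / (1 + x)) /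
      log (1 - β) ^ 2) l (nhds 0) := by
    apply squeeze_zero_norm' _ (by simpa using hi.abs)
    filter_upwards [hmem] with β hβ
    have hl : log (1 - β) < 0 := log_neg (by linarith [hβ.2]) (by linarith [hβ.1])
    have hp : 0 < |log (1 - β)| := abs_pos.2 hl.ne
    rw [norm_div, norm_pow, norm_eq_abs, norm_eq_abs, div_le_iff₀ (by positivity)]
    have := aux_rem β hβ.1 hβ.2
    have e : |log (1 - β)|⁻¹ * |log (1 - β)| ^ 2 = |log (1 - β)| := by field_simp
    rw [e]
    exact this
  have := ((tendsto_const_nhds (x := (3/8:ℝ))).add ((hw.pow 2).const_mul (1/8))).sub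
    (hw.const_mul (3/4)) |>.add hr
  norm_num at this
  refine Filter.Tendsto.congr' ?_ this
  filter_upwards [hmem] with β hβ
  have hl : log (1 - β) < 0 := log_neg (by linarith [hβ.2]) (by linarith [hβ.1])
  have hl := hl.ne
  rw [aux_fubini β hβ.1 hβ.2, aux_eval β hβ.1 hβ.2]
  norm_num
  field_simp

theorem stmt12 :
    Filter.Tendsto
      (fun α : ℝ =>
        (∫ q in {q : ℝ × ℝ | |q.1| < q.2 ∧ q.2 < α}, dualBallArea q) /
          (Real.log (1 - α)) ^ 2)
      (nhdsWithin 1 (Set.Ioo (0 : ℝ) 1)) (nhds (3 / 8)) ∧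
    Filter.Tendsto
      (fun β : ℝ =>
        (∫ q in {q : ℝ × ℝ | |q.2| < q.1 ∧ q.1 < β}, dualBallArea q) /
          (Real.log (1 - β)) ^ 2)
      (nhdsWithin 1 (Set.Ioo (0 : ℝ) 1)) (nhds (3 / 8)) := by
  refine ⟨?_, aux_tendsto⟩
  convert aux_tendsto using 3 with α
  have hmp : MeasurePreserving (Prod.swap : ℝ × ℝ → ℝ × ℝ) volume volume :=
    Measure.measurePreserving_swap
  have := hmp.setIntegral_preimage_emb MeasurableEquiv.prodComm.measurableEmbedding
    dualBallArea {q : ℝ × ℝ | |q.2| < q.1 ∧ q.1 < α}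
  rw [← this]
  have hs : ∀ q : ℝ × ℝ, dualBallArea q.swap = dualBallArea q := by
    intro q
    simp only [dualBallArea, Prod.fst_swap, Prod.snd_swap]
    rw [max_comm, mul_right_comm]
  simp only [hs]
  rfl
end

section
/- For every α ∈ [0,1), ∫₀^α ((2+y)/(1−y²))·log((1+y)/(1−y)) dy = Li₂((1−α)/2) − π²/12 + (log 2)²/2 + (1/4)·( (log(1+α))² − 4·(log 2)·log(1−α) + 3·(log(1−α))² − 2·log(1−α)·log(1+α) ). -/
open MeasureTheory Real

/-- The real dilogarithm, for `z < 1`. -/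
noncomputable def Li2 (z : ℝ) : ℝ := -∫ v in (0 : ℝ)..z, Real.log (1 - v) / v

noncomputable def Sdl (z : ℝ) : ℝ := ∑' n : ℕ, z ^ (n + 1) / ((n : ℝ) + 1) ^ 2

lemma Sdl_summable : Summable (fun n : ℕ => 1 / ((n : ℝ) + 1) ^ 2) := by
  have := (summable_nat_add_iff 1).2 hasSum_zeta_two.summable
  simpa using this

lemma Sdl_one : Sdl 1 = π ^ 2 / 6 := by
  have h := hasSum_zeta_two
  rw [← hasSum_nat_add_iff' 1] at h
  simpa [Sdl] using h.tsum_eq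

lemma Sdl_zero : Sdl 0 = 0 := by simp [Sdl]

lemma Sdl_cont : ContinuousOn Sdl (Set.Icc 0 1) := by
  unfold Sdl
  refine continuousOn_tsum (fun n => by fun_prop) Sdl_summable ?_
  intro n x hx
  have h1 : x ^ (n + 1) ≤ 1 := pow_le_one₀ hx.1 hx.2
  have h0 : 0 ≤ x ^ (n + 1) := pow_nonneg hx.1 _
  rw [Real.norm_of_nonneg (by positivity)]
  gcongr

lemma Sdl_deriv {z : ℝ} (hz : z ∈ Set.Ioo (0 : ℝ) 1) :
    HasDerivAt Sdl (-(Real.log (1 - z) / z)) z := by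
  obtain ⟨r, hr1, hr2⟩ := exists_between hz.2
  have hr0 : 0 < r := hz.1.trans hr1
  have key : HasDerivAt Sdl (∑' n : ℕ, z ^ n / ((n : ℝ) + 1)) z := by
    unfold Sdl
    refine hasDerivAt_tsum_of_isPreconnected (u := fun n : ℕ => r ^ n) (t := Set.Ioo 0 r)
      (g' := fun n z => z ^ n / ((n : ℝ) + 1)) (y₀ := z)
      (summable_geometric_of_lt_one hr0.le hr2) isOpen_Ioo isPreconnected_Ioo ?_ ?_
      ⟨hz.1, hr1⟩ ?_ ⟨hz.1, hr1⟩
    · intro n y hy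
      have := (hasDerivAt_pow (n + 1) y).div_const (((n : ℝ) + 1) ^ 2)
      refine this.congr_deriv ?_
      have : (n : ℝ) + 1 ≠ 0 := by positivity
      push_cast
      field_simp
    · intro n y hy
      have hy0 := hy.1.le
      rw [Real.norm_of_nonneg (by positivity)]
      calc y ^ n / ((n : ℝ) + 1) ≤ y ^ n / 1 := by
            gcongr
            linarith [Nat.cast_nonneg (α := ℝ) n]
        _ ≤ r ^ n := by
            rw [div_one]
            exact pow_le_pow_left₀ hy0 hy.2.le n
    · refine Sdl_summable.of_nonneg_of_le (fun n => ?_) (fun n => ?_)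
      · have := hz.1.le
        positivity
      · have h1 : z ^ (n + 1) ≤ 1 := pow_le_one₀ hz.1.le hz.2.le
        gcongr
  convert key using 1
  have h := Real.hasSum_pow_div_log_of_abs_lt_one (x := z) (by rw [abs_of_pos hz.1]; exact hz.2)
  have h2 := h.div_const z
  rw [← neg_div, ← h2.tsum_eq]
  congr 1
  ext n
  have := hz.1.ne'
  have : (n : ℝ) + 1 ≠ 0 := by positivity
  field_simp
  ring

lemma Li2_eq_Sdl {z : ℝ} (hz : z ∈ Set.Ioo (0 : ℝ) 1) : Li2 z = Sdl z := by
  have hc : ContinuousOn Sdl (Set.Icc 0 z) := Sdl_cont.mono (Set.Icc_subset_Icc le_rfl hz.2.le)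
  have hd : ∀ x ∈ Set.Ioo 0 z, HasDerivAt Sdl (-(Real.log (1 - x) / x)) x :=
    fun x hx => Sdl_deriv ⟨hx.1, hx.2.trans hz.2⟩
  have hi : IntervalIntegrable (fun x => -(Real.log (1 - x) / x)) volume 0 z := by
    rw [intervalIntegrable_iff_integrableOn_Ioc_of_le hz.1.le]
    refine intervalIntegral.integrableOn_deriv_of_nonneg hc hd ?_
    intro x hx
    have : Real.log (1 - x) ≤ 0 :=
      Real.log_nonpos (by linarith [hx.2, hz.2]) (by linarith [hx.1])
    rw [← neg_div]
    exact div_nonneg (by linarith) hx.1.le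
  have := intervalIntegral.integral_eq_sub_of_hasDerivAt_of_le hz.1.le hc hd hi
  rw [intervalIntegral.integral_neg, Sdl_zero, sub_zero] at this
  exact this

lemma loglog_cont : ContinuousOn (fun z : ℝ => Real.log z * Real.log (1 - z))
    (Set.Icc 0 (1 / 2)) := by
  have hd : ContinuousOn (dslope (fun v : ℝ => Real.log (1 - v)) 0) (Set.Icc 0 (1 / 2)) := by
    intro x hx
    have hdiff : DifferentiableAt ℝ (fun v : ℝ => Real.log (1 - v)) x := by
      have : (1 : ℝ) - x ≠ 0 := by linarith [hx.2]
      fun_prop (disch := assumption)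
    refine ContinuousAt.continuousWithinAt ?_
    rcases eq_or_ne x 0 with rfl | h
    · exact continuousAt_dslope_same.2 hdiff
    · exact (continuousAt_dslope_of_ne h).2 hdiff.continuousAt
  refine (Real.continuous_mul_log.continuousOn.mul hd).congr ?_
  intro x hx
  rcases eq_or_ne x 0 with rfl | h
  · simp
  · show _ = x * Real.log x * dslope (fun v : ℝ => Real.log (1 - v)) 0 x
    rw [dslope_of_ne _ h, slope_def_field]
    simp
    field_simp

lemma Sdl_half : Sdl (1 / 2) = π ^ 2 / 12 - (Real.log 2) ^ 2 / 2 := by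
  set G : ℝ → ℝ := fun z => Sdl z + Sdl (1 - z) + Real.log z * Real.log (1 - z) with hG
  have hc : ContinuousOn G (Set.Icc 0 (1 / 2)) := by
    refine ((Sdl_cont.mono (Set.Icc_subset_Icc le_rfl (by norm_num))).add ?_).add loglog_cont
    refine Sdl_cont.comp (by fun_prop) ?_
    intro x hx
    constructor <;> linarith [hx.1, hx.2]
  have hd : ∀ x ∈ Set.Ioo (0 : ℝ) (1 / 2), HasDerivAt G 0 x := by
    intro x hx
    have hx0 : x ≠ 0 := hx.1.ne'
    have hx1 : (1 : ℝ) - x ≠ 0 := by linarith [hx.2]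
    have h1 := Sdl_deriv (z := x) ⟨hx.1, by linarith [hx.2]⟩
    have hs : HasDerivAt (fun z : ℝ => 1 - z) (-1) x := by
      simpa using (hasDerivAt_id x).const_sub 1
    have h2 := (Sdl_deriv (z := 1 - x) ⟨by linarith [hx.2], by linarith [hx.1]⟩).comp x hs
    have h3 := (Real.hasDerivAt_log hx0).mul (hs.log hx1)
    refine ((h1.add h2).add h3).congr_deriv ?_
    simp only [sub_sub_cancel]
    field_simp
    ring
  obtain ⟨c, hc', hce⟩ := exists_hasDerivAt_eq_slope G (fun _ => 0) (by norm_num) hc hd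
  have hGe : G (1 / 2) = G 0 := by
    norm_num at hce
    linarith
  simp only [hG, Sdl_zero, sub_zero, Real.log_zero] at hGe
  norm_num at hGe
  have hl : Real.log (1 / 2) = - Real.log 2 := by rw [one_div, Real.log_inv]
  rw [hl] at hGe
  norm_num
  norm_num at hGe
  rw [Sdl_one] at hGe
  nlinarith

theorem stmt13 (α : ℝ) (hα : α ∈ Set.Ico (0 : ℝ) 1) :
    (∫ y in (0 : ℝ)..α, ((2 + y) / (1 - y ^ 2)) * Real.log ((1 + y) / (1 - y))) =
      Li2 ((1 - α) / 2) - π ^ 2 / 12 + (Real.log 2) ^ 2 / 2 +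
        (1 / 4) * ((Real.log (1 + α)) ^ 2 - 4 * Real.log 2 * Real.log (1 - α) +
          3 * (Real.log (1 - α)) ^ 2 - 2 * Real.log (1 - α) * Real.log (1 + α)) := by
  obtain ⟨h0, h1⟩ := hα
  rw [Li2_eq_Sdl ⟨by linarith, by linarith⟩]
  have hd : ∀ y ∈ Set.uIcc 0 α, HasDerivAt (fun y : ℝ => Sdl ((1 - y) / 2) +
      (1 / 4) * ((Real.log (1 + y)) ^ 2 - 4 * Real.log 2 * Real.log (1 - y) +
          3 * (Real.log (1 - y)) ^ 2 - 2 * Real.log (1 - y) * Real.log (1 + y)))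
      (((2 + y) / (1 - y ^ 2)) * Real.log ((1 + y) / (1 - y))) y := by
    intro y hy
    rw [Set.uIcc_of_le h0] at hy
    have hp : (1 : ℝ) + y ≠ 0 := by linarith [hy.1]
    have hm : (1 : ℝ) - y ≠ 0 := by linarith [hy.2]
    have hs : HasDerivAt (fun z : ℝ => 1 - z) (-1) y := by
      simpa using (hasDerivAt_id y).const_sub 1
    have ha : HasDerivAt (fun z : ℝ => 1 + z) 1 y := by
      simpa using (hasDerivAt_id y).const_add 1
    have hS := (Sdl_deriv (z := (1 - y) / 2) ⟨by linarith [hy.2], by linarith [hy.1]⟩).comp y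
      (hs.div_const 2)
    have hA := ha.log hp
    have hB := hs.log hm
    have := hS.add (((((hA.pow 2).sub (hB.const_mul (4 * Real.log 2))).add
      ((hB.pow 2).const_mul 3)).sub ((hB.const_mul 2).mul hA)).const_mul (1 / 4))
    refine this.congr_deriv ?_
    have e1 : (1 : ℝ) - (1 - y) / 2 = (1 + y) / 2 := by ring
    have e2 : (1 : ℝ) - y ^ 2 = (1 - y) * (1 + y) := by ring
    rw [e1, e2, Real.log_div hp hm, Real.log_div hp two_ne_zero]
    field_simp
    ring
  have hi : IntervalIntegrable (fun y : ℝ => ((2 + y) / (1 - y ^ 2)) *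
      Real.log ((1 + y) / (1 - y))) volume 0 α := by
    refine ContinuousOn.intervalIntegrable ?_
    intro y hy
    rw [Set.uIcc_of_le h0] at hy
    have hp : (1 : ℝ) + y ≠ 0 := by linarith [hy.1]
    have hm : (1 : ℝ) - y ≠ 0 := by linarith [hy.2]
    have h2 : (1 : ℝ) - y ^ 2 ≠ 0 := by
      have e2 : (1 : ℝ) - y ^ 2 = (1 - y) * (1 + y) := by ring
      rw [e2]
      exact mul_ne_zero hm hp
    have h3 : (1 + y) / (1 - y) ≠ 0 := div_ne_zero hp hm
    refine ContinuousAt.continuousWithinAt ?_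
    have c1 : ContinuousAt (fun y : ℝ => (2 + y) / (1 - y ^ 2)) y :=
      ContinuousAt.div (by fun_prop) (by fun_prop) h2
    have c2 : ContinuousAt (fun y : ℝ => (1 + y) / (1 - y)) y :=
      ContinuousAt.div (by fun_prop) (by fun_prop) hm
    exact c1.mul (c2.log h3)
  rw [intervalIntegral.integral_eq_sub_of_hasDerivAt hd hi]
  simp only [sub_zero, add_zero, Real.log_one, Sdl_half]
  ring
end

section
/- For every ε > 0 there exists δ ∈ (0,1) such that for all α, β ∈ [0,1) with max(α,β) > 1−δ, setting γ = (1−αβ)/(2−α−β), one has | (∫_{(−γ,γ)×(−γ,γ)} A(x,y) d(x,y)) / (log(1−max(α,β)))² − 3/2 | < ε. -/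
open MeasureTheory Real

lemma aux_int1 (γ : ℝ) (h0 : 0 ≤ γ) (h1 : γ < 1) :
    ∫ x in Set.Ioo (-γ) γ, 1 / (1 - x ^ 2) = Real.log (1 + γ) - Real.log (1 - γ) := by
  rw [← integral_Ioc_eq_integral_Ioo, ← intervalIntegral.integral_of_le (by linarith)]
  have hne : ∀ x ∈ Set.uIcc (-γ) γ, 0 < 1 + x ∧ 0 < 1 - x := by
    intro x hx
    rw [Set.uIcc_of_le (by linarith)] at hx
    exact ⟨by linarith [hx.1], by linarith [hx.2]⟩
  rw [intervalIntegral.integral_eq_sub_of_hasDerivAt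
    (f := fun x => (Real.log (1 + x) - Real.log (1 - x)) / 2)]
  · simp only [← sub_eq_add_neg, sub_neg_eq_add]
    ring
  · intro x hx
    obtain ⟨ha, hb⟩ := hne x hx
    have d1 : HasDerivAt (fun x : ℝ => Real.log (1 + x)) (1 / (1 + x)) x :=
      ((hasDerivAt_id x).const_add 1).log ha.ne'
    have d2 : HasDerivAt (fun x : ℝ => Real.log (1 - x)) (-1 / (1 - x)) x :=
      ((hasDerivAt_id x).const_sub 1).log hb.ne'
    refine ((d1.sub d2).div_const 2).congr_deriv ?_
    have ha' := ha.ne'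
    have hb' := hb.ne'
    have hx2 : 1 - x ^ 2 = (1 + x) * (1 - x) := by ring
    rw [hx2]
    field_simp
    ring
  · apply ContinuousOn.intervalIntegrable
    apply ContinuousOn.div continuousOn_const (by fun_prop)
    intro x hx
    obtain ⟨ha, hb⟩ := hne x hx
    nlinarith [mul_pos ha hb]

lemma aux_integrable (γ : ℝ) (f : ℝ × ℝ → ℝ)
    (hf : ContinuousOn f (Set.Icc (-γ) γ ×ˢ Set.Icc (-γ) γ)) :
    IntegrableOn f (Set.Ioo (-γ) γ ×ˢ Set.Ioo (-γ) γ) := by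
  refine (hf.integrableOn_compact (isCompact_Icc.prod isCompact_Icc)).mono_set ?_
  exact Set.prod_mono Set.Ioo_subset_Icc_self Set.Ioo_subset_Icc_self

lemma aux_pos (γ : ℝ) (h1 : γ < 1) (x : ℝ) (hx : x ∈ Set.Icc (-γ) γ) : 0 < 1 - x ^ 2 := by
  have ha : 0 < 1 + x := by linarith [hx.1]
  have hb : 0 < 1 - x := by linarith [hx.2]
  nlinarith [mul_pos ha hb]

lemma aux_bounds (γ : ℝ) (h0 : 0 ≤ γ) (h1 : γ < 1) (L : ℝ)
    (hL : L = Real.log (1 + γ) - Real.log (1 - γ)) :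
    3 / 2 * L ^ 2 - γ * L ≤ ∫ q in Set.Ioo (-γ) γ ×ˢ Set.Ioo (-γ) γ, dualBallArea q ∧
    ∫ q in Set.Ioo (-γ) γ ×ˢ Set.Ioo (-γ) γ, dualBallArea q ≤ 3 / 2 * L ^ 2 := by
  have hmeas : MeasurableSet (Set.Ioo (-γ) γ ×ˢ Set.Ioo (-γ) γ) :=
    measurableSet_Ioo.prod measurableSet_Ioo
  have c1 : ContinuousOn (fun q : ℝ × ℝ => 1 / (1 - q.1 ^ 2))
      (Set.Icc (-γ) γ ×ˢ Set.Icc (-γ) γ) :=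
    ContinuousOn.div continuousOn_const (by fun_prop) fun q hq => (aux_pos γ h1 _ hq.1).ne'
  have c2 : ContinuousOn (fun q : ℝ × ℝ => 1 / (1 - q.2 ^ 2))
      (Set.Icc (-γ) γ ×ˢ Set.Icc (-γ) γ) :=
    ContinuousOn.div continuousOn_const (by fun_prop) fun q hq => (aux_pos γ h1 _ hq.2).ne'
  have cA : ContinuousOn dualBallArea (Set.Icc (-γ) γ ×ˢ Set.Icc (-γ) γ) := by
    unfold dualBallArea
    refine ContinuousOn.div (by fun_prop) (by fun_prop) fun q hq => ?_
    have := aux_pos γ h1 _ hq.1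
    have := aux_pos γ h1 _ hq.2
    positivity
  have iA := aux_integrable γ _ cA
  have i12 : IntegrableOn (fun q : ℝ × ℝ => (1 / (1 - q.1 ^ 2)) * (1 / (1 - q.2 ^ 2)))
      (Set.Ioo (-γ) γ ×ˢ Set.Ioo (-γ) γ) := aux_integrable γ _ (c1.mul c2)
  have i2 := aux_integrable γ _ c2
  have e12 : ∫ q in Set.Ioo (-γ) γ ×ˢ Set.Ioo (-γ) γ, (1 / (1 - q.1 ^ 2)) * (1 / (1 - q.2 ^ 2))
      = L ^ 2 := by
    have := setIntegral_prod_mul (μ := (volume : Measure ℝ)) (ν := (volume : Measure ℝ))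
      (fun x : ℝ => 1 / (1 - x ^ 2)) (fun x : ℝ => 1 / (1 - x ^ 2))
      (Set.Ioo (-γ) γ) (Set.Ioo (-γ) γ)
    rw [aux_int1 γ h0 h1, ← hL] at this
    rw [sq, ← this]; rfl
  have e2 : ∫ q in Set.Ioo (-γ) γ ×ˢ Set.Ioo (-γ) γ, (1 / (1 - q.2 ^ 2))
      = 2 * γ * L := by
    have := setIntegral_prod_mul (μ := (volume : Measure ℝ)) (ν := (volume : Measure ℝ))
      (fun _ : ℝ => (1 : ℝ)) (fun x : ℝ => 1 / (1 - x ^ 2))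
      (Set.Ioo (-γ) γ) (Set.Ioo (-γ) γ)
    rw [aux_int1 γ h0 h1, ← hL] at this
    have h3 : ∫ _ in Set.Ioo (-γ) γ, (1 : ℝ) = 2 * γ := by
      simp [Measure.real, h0]; ring
    rw [h3] at this
    rw [← this]
    simp only [one_mul]; rfl
  constructor
  · have : 3 / 2 * L ^ 2 - γ * L = ∫ q in Set.Ioo (-γ) γ ×ˢ Set.Ioo (-γ) γ,
        (3 / 2 * ((1 / (1 - q.1 ^ 2)) * (1 / (1 - q.2 ^ 2))) - 1 / 2 * (1 / (1 - q.2 ^ 2))) := by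
      rw [integral_sub (i12.const_mul _) (i2.const_mul _), integral_const_mul, integral_const_mul,
        e12, e2]; ring
    rw [this]
    refine setIntegral_mono_on ((i12.const_mul _).sub (i2.const_mul _)) iA hmeas fun q hq => ?_
    have p1 := aux_pos γ h1 _ (Set.Ioo_subset_Icc_self hq.1)
    have p2 := aux_pos γ h1 _ (Set.Ioo_subset_Icc_self hq.2)
    unfold dualBallArea
    have : 3 / 2 * ((1 / (1 - q.1 ^ 2)) * (1 / (1 - q.2 ^ 2))) - 1 / 2 * (1 / (1 - q.2 ^ 2))
      = (3 - (1 - q.1 ^ 2)) / (2 * (1 - q.1 ^ 2) * (1 - q.2 ^ 2)) := by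
      field_simp
    rw [this]
    gcongr
    have hm := le_max_left |q.1| |q.2|
    have : |q.1| < 1 := (abs_lt.2 ⟨hq.1.1, hq.1.2⟩).trans h1
    nlinarith [sq_abs q.1, abs_nonneg q.1]
  · rw [← e12, ← integral_const_mul]
    refine setIntegral_mono_on iA (i12.const_mul _) hmeas fun q hq => ?_
    have p1 := aux_pos γ h1 _ (Set.Ioo_subset_Icc_self hq.1)
    have p2 := aux_pos γ h1 _ (Set.Ioo_subset_Icc_self hq.2)
    unfold dualBallArea
    have : 3 / 2 * ((1 / (1 - q.1 ^ 2)) * (1 / (1 - q.2 ^ 2)))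
      = 3 / (2 * (1 - q.1 ^ 2) * (1 - q.2 ^ 2)) := by
      field_simp
    rw [this]
    gcongr
    have h3 : |q.1| < 1 := (abs_lt.2 ⟨hq.1.1, hq.1.2⟩).trans h1
    have h4 : |q.2| < 1 := (abs_lt.2 ⟨hq.2.1, hq.2.2⟩).trans h1
    linarith [max_lt h3 h4]

theorem stmt14 :
    ∀ ε > (0 : ℝ), ∃ δ ∈ Set.Ioo (0 : ℝ) 1,
      ∀ α β : ℝ, α ∈ Set.Ico (0 : ℝ) 1 → β ∈ Set.Ico (0 : ℝ) 1 → 1 - δ < max α β →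
        |(∫ q in Set.Ioo (-((1 - α * β) / (2 - α - β))) ((1 - α * β) / (2 - α - β)) ×ˢ
              Set.Ioo (-((1 - α * β) / (2 - α - β))) ((1 - α * β) / (2 - α - β)),
            dualBallArea q) / (Real.log (1 - max α β)) ^ 2 - 3 / 2| < ε := by
  intro ε hε
  have hk : 0 < 12 / ε := by positivity
  refine ⟨Real.exp (-(12 / ε + 1)), ⟨Real.exp_pos _, ?_⟩, ?_⟩
  · rw [Real.exp_lt_one_iff]; linarith
  intro α β hα hβ hm
  have hmax0 : 0 ≤ max α β := le_max_of_le_left hα.1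
  have hmax1 : max α β < 1 := max_lt hα.2 hβ.2
  set m := 1 - max α β with hmdef
  have hm0 : 0 < m := by linarith
  have hmδ : m < Real.exp (-(12 / ε + 1)) := by linarith
  have ha := hα.2
  have hb := hβ.2
  have hs : 0 < 2 - α - β := by linarith
  set γ := (1 - α * β) / (2 - α - β) with hγ
  have hg : 1 - γ = (1 - α) * (1 - β) / (2 - α - β) := by
    rw [hγ]; field_simp; ring
  have hlo : m / 2 ≤ 1 - γ := by
    rw [hg, le_div_iff₀ hs]
    rcases le_total α β with h | h
    · rw [hmdef, max_eq_right h]; nlinarith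
    · rw [hmdef, max_eq_left h]; nlinarith
  have hhi : 1 - γ ≤ m := by
    rw [hg, div_le_iff₀ hs]
    rcases le_total α β with h | h
    · rw [hmdef, max_eq_right h]; nlinarith
    · rw [hmdef, max_eq_left h]; nlinarith
  have h0 : 0 ≤ γ := by linarith
  have h1 : γ < 1 := by linarith
  obtain ⟨b1, b2⟩ := aux_bounds γ h0 h1 _ rfl
  set L := Real.log (1 + γ) - Real.log (1 - γ) with hL
  set I := ∫ q in Set.Ioo (-γ) γ ×ˢ Set.Ioo (-γ) γ, dualBallArea q
  obtain ⟨l, hl⟩ : ∃ l, l = -Real.log m := ⟨_, rfl⟩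
  have hl12 : 12 / ε + 1 < l := by
    have := Real.log_lt_log hm0 hmδ
    rw [Real.log_exp] at this
    linarith
  have hlog2 : Real.log 2 ≤ 1 := by linarith [Real.log_two_lt_d9]
  have t1 : 0 ≤ Real.log (1 + γ) := Real.log_nonneg (by linarith)
  have t2 : Real.log (1 + γ) ≤ Real.log 2 := Real.log_le_log (by linarith) (by linarith)
  have t3 : Real.log (1 - γ) ≤ Real.log m := Real.log_le_log (by linarith) hhi
  have t4 : Real.log m - Real.log 2 ≤ Real.log (1 - γ) := by
    rw [← Real.log_div hm0.ne' (by norm_num)]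
    exact Real.log_le_log (by linarith) hlo
  have L1 : l ≤ L := by linarith
  have L2 : L ≤ l + 2 := by linarith
  have hl1 : 1 < l := by linarith
  have key : |I - 3 / 2 * l ^ 2| ≤ 12 * l := by
    rw [abs_le]
    constructor <;> nlinarith
  have hlsq : Real.log m ^ 2 = l ^ 2 := by rw [hl]; ring
  have hεl : 12 < ε * l := by
    have : 12 / ε < l := by linarith
    rw [div_lt_iff₀ hε] at this
    linarith
  rw [hlsq]
  have hl2 : 0 < l ^ 2 := by positivity
  have : I / l ^ 2 - 3 / 2 = (I - 3 / 2 * l ^ 2) / l ^ 2 := by field_simp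
  rw [this, abs_div, abs_of_pos hl2, div_lt_iff₀ hl2]
  nlinarith
end

section
/- Let α, β ∈ [0,1) and set γ = (1−αβ)/(2−α−β). Let D' = {(x,y) ∈ ℝ² : γ < y < 1 and β − ((1+β)/(1−α))·(1−y) < x < β} (the open triangle cut out by the lines y = γ, x = β, and the line through (β,1) and (−1,α)). Then ∫_{D'} (2+y)/((1−x²)(1−y²)) d(x,y) ≤ (2/(1−β))·(log(2−α−β) − log(1−α)). -/
open MeasureTheory Real

theorem stmt17 (α β : ℝ) (hα : α ∈ Set.Ico (0 : ℝ) 1) (hβ : β ∈ Set.Ico (0 : ℝ) 1) :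
    (∫ q in {q : ℝ × ℝ | (1 - α * β) / (2 - α - β) < q.2 ∧ q.2 < 1 ∧
        β - ((1 + β) / (1 - α)) * (1 - q.2) < q.1 ∧ q.1 < β},
      (2 + q.2) / ((1 - q.1 ^ 2) * (1 - q.2 ^ 2))) ≤
    (2 / (1 - β)) * (Real.log (2 - α - β) - Real.log (1 - α)) := by
  obtain ⟨ha0, ha1⟩ := hα
  obtain ⟨hb0, hb1⟩ := hβ
  have hA : 0 < 1 - α := by linarith
  have hB : 0 < 1 - β := by linarith
  have hB' : 0 < 1 + β := by linarith
  have hS : 0 < 2 - α - β := by linarith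
  obtain ⟨γ, hγ⟩ : ∃ γ, γ = (1 - α * β) / (2 - α - β) := ⟨_, rfl⟩
  rw [← hγ]
  have hγα : γ - α = (1 - α) ^ 2 / (2 - α - β) := by
    rw [hγ]; field_simp; ring
  have hγα0 : 0 < γ - α := by rw [hγα]; positivity
  have hγ1' : 1 - γ = (1 - α) * (1 - β) / (2 - α - β) := by
    rw [hγ]; field_simp; ring
  have hγ1 : 0 < 1 - γ := by rw [hγ1']; positivity
  set D : Set (ℝ × ℝ) := {q : ℝ × ℝ | γ < q.2 ∧ q.2 < 1 ∧
        β - ((1 + β) / (1 - α)) * (1 - q.2) < q.1 ∧ q.1 < β} with hD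
  have hDm : MeasurableSet D := by
    have m1 : MeasurableSet {q : ℝ × ℝ | γ < q.2} :=
      measurableSet_lt (by fun_prop) (by fun_prop)
    have m2 : MeasurableSet {q : ℝ × ℝ | q.2 < 1} :=
      measurableSet_lt (by fun_prop) (by fun_prop)
    have m3 : MeasurableSet {q : ℝ × ℝ | β - ((1 + β) / (1 - α)) * (1 - q.2) < q.1} :=
      measurableSet_lt (by fun_prop) (by fun_prop)
    have m4 : MeasurableSet {q : ℝ × ℝ | q.1 < β} :=
      measurableSet_lt (by fun_prop) (by fun_prop)
    exact m1.inter (m2.inter (m3.inter m4))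
  obtain ⟨g, hg⟩ : ∃ g : ℝ → ℝ, g = fun y =>
    2 * (1 - α) / ((1 - y) * (1 - β) * (1 + β) * (y - α)) := ⟨_, rfl⟩
  have hgm : Measurable g := by rw [hg]; fun_prop
  have hgpos : ∀ y, γ < y → y < 1 → 0 ≤ g y := by
    intro y h1 h2
    rw [hg]
    have : 0 < 1 - y := by linarith
    have : 0 < y - α := by linarith
    positivity
  obtain ⟨G, hG⟩ : ∃ G : ℝ × ℝ → ℝ, G = D.indicator (fun q => g q.2) := ⟨_, rfl⟩
  have hGm : Measurable G := by
    rw [hG]; exact (hgm.comp measurable_snd).indicator hDm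
  have hGpos : ∀ q, 0 ≤ G q := by
    intro q
    rw [hG]
    exact Set.indicator_nonneg (fun q hq => hgpos q.2 hq.1 hq.2.1) q
  have hsec : ∀ y, γ < y → y < 1 → (fun x => G (x, y)) =
      (Set.Ioo (β - ((1 + β) / (1 - α)) * (1 - y)) β).indicator (fun _ => g y) := by
    intro y h1 h2
    funext x
    rw [hG]
    simp only [Set.indicator, hD, Set.mem_ofPred_eq, h1, h2, true_and, Set.mem_Ioo]
  have hsec0 : ∀ y, y ∉ Set.Ioo γ 1 → (fun x => G (x, y)) = fun _ => 0 := by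
    intro y h
    funext x
    rw [hG]
    apply Set.indicator_of_notMem
    intro hq
    exact h ⟨hq.1, hq.2.1⟩
  have hint : (fun y => ∫ x, G (x, y)) =
      (Set.Ioo γ 1).indicator (fun y => (2 / (1 - β)) * (y - α)⁻¹) := by
    funext y
    by_cases hy : y ∈ Set.Ioo γ 1
    · rw [Set.indicator_of_mem hy, hsec y hy.1 hy.2, integral_indicator measurableSet_Ioo,
        setIntegral_const]
      have h1 : 0 < 1 - y := by linarith [hy.2]
      have h2 : 0 < y - α := by linarith [hy.1]
      rw [Real.volume_real_Ioo_of_le (by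
        have : 0 ≤ (1 + β) / (1 - α) * (1 - y) := by positivity
        linarith), hg, smul_eq_mul]
      field_simp
      ring
    · rw [Set.indicator_of_notMem hy, hsec0 y hy]
      simp
  have hcont : ContinuousOn (fun y : ℝ => (2 / (1 - β)) * (y - α)⁻¹) (Set.Icc γ 1) := by
    apply ContinuousOn.mul continuousOn_const
    apply ContinuousOn.inv₀ (by fun_prop)
    intro y hy
    have := hy.1
    linarith
  have hint1 : Integrable (fun y => ∫ x, G (x, y)) := by
    rw [hint, integrable_indicator_iff measurableSet_Ioo]
    exact hcont.integrableOn_Icc.mono_set Set.Ioo_subset_Icc_self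
  have hGint : Integrable G := by
    rw [Measure.volume_eq_prod, integrable_prod_iff' hGm.aestronglyMeasurable]
    refine ⟨Filter.Eventually.of_forall fun y => ?_, ?_⟩
    · by_cases hy : y ∈ Set.Ioo γ 1
      · rw [hsec y hy.1 hy.2, integrable_indicator_iff measurableSet_Ioo]
        exact integrableOn_const (by simp)
      · rw [hsec0 y hy]
        exact integrable_zero _ _ _
    · simpa only [Real.norm_of_nonneg (hGpos _)] using hint1
  have hGval : ∫ q, G q = (2 / (1 - β)) * (Real.log (2 - α - β) - Real.log (1 - α)) := by
    rw [Measure.volume_eq_prod] at hGint ⊢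
    rw [integral_prod_symm _ hGint, hint, integral_indicator measurableSet_Ioo,
      ← integral_Ioc_eq_integral_Ioo, ← intervalIntegral.integral_of_le (by linarith),
      intervalIntegral.integral_const_mul,
      intervalIntegral.integral_comp_sub_right (fun y => y⁻¹),
      integral_inv_of_pos hγα0 hA, hγα]
    congr 1
    rw [← Real.log_div hS.ne' hA.ne']
    congr 1
    field_simp
  rw [← hGval, ← integral_indicator hDm]
  have key : ∀ q ∈ D, 0 ≤ (2 + q.2) / ((1 - q.1 ^ 2) * (1 - q.2 ^ 2)) ∧
      (2 + q.2) / ((1 - q.1 ^ 2) * (1 - q.2 ^ 2)) ≤ g q.2 := by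
    rintro ⟨x, y⟩ ⟨h1, h2, h3, h4⟩
    simp only at h1 h2 h3 h4 ⊢
    have hy : 0 < 1 - y := by linarith
    have hyα : 0 < y - α := by linarith
    have hy0 : 0 < y := by linarith
    have hx : (1 + β) * (y - α) / (1 - α) < 1 + x := by
      have : (1 + β) * (y - α) / (1 - α) = 1 + (β - ((1 + β) / (1 - α)) * (1 - y)) := by
        field_simp; ring
      linarith
    have hw : 0 < (1 + β) * (y - α) / (1 - α) := by positivity
    have hx1 : 0 < 1 + x := by linarith
    have hx2 : 0 < 1 - x := by linarith
    have e1 : (1 - x ^ 2) * (1 - y ^ 2) = ((1 - x) * (1 + x)) * ((1 - y) * (1 + y)) := by ring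
    rw [e1]
    refine ⟨by positivity, ?_⟩
    have e2 : g y = 2 * (1 + y) /
        (((1 - β) * ((1 + β) * (y - α) / (1 - α))) * ((1 - y) * (1 + y))) := by
      rw [hg]; field_simp
    rw [e2]
    have : 1 - β ≤ 1 - x := by linarith
    apply div_le_div₀ (by positivity) (by linarith) (by positivity)
    gcongr
  apply integral_mono_of_nonneg _ hGint
  · refine Filter.Eventually.of_forall fun q => ?_
    rw [hG]
    exact Set.indicator_le_indicator' fun hq => (key q hq).2
  · exact Filter.Eventually.of_forall fun q =>
      Set.indicator_nonneg (fun q hq => (key q hq).1) q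
end
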